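/- arXiv:0906.3881 — 5 statements merged into one kernel-verified Lean document; each statement's English description precedes it below -/
import Mathlib

section
/- Existence of the Katsylo-type contraction map: let (e,h,f) be an sl2-triple in gl(V) (so [h,e] = 2e, [h,f] = −2f, [e,f] = h; then ad h is diagonalizable with integer eigenvalues) and let g(i,h) := {z ∈ gl(V) : [h,z] = iz}. There exists a polynomial map ε : e + ⊕_{i≤0} g(2i,h) → e + (g^f ∩ ⊕_{i≤0} g(2i,h)) such that: (i) for every z ∈ ⊕_{i≤0} g(2i,h), ε(e+z) is GL(V)-conjugate to e+z; (ii) for every j ≤ 0, the composition P_j of the restriction of ε to e + g(0,h) with the projection of ⊕_{i≤0} g(2i,h) onto g(2j,h) is either zero or a homogeneous polynomial map of degree −j+1. -/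
/-! Existence of the Katsylo-type contraction map `ε` attached to an sl2-triple
`(e, h, f)` in `gl(V)`. -/

namespace KatsyloSetup

variable {𝕂 : Type*} [Field 𝕂] {N : ℕ}

/-- The eigenspace `g(c, h) = {z : [h, z] = c·z}` of `ad h` on `gl_N`. -/
def gSpace (h : Matrix (Fin N) (Fin N) 𝕂) (c : 𝕂) :
    Submodule 𝕂 (Matrix (Fin N) (Fin N) 𝕂) :=
  LinearMap.ker
    ((LinearMap.mulLeft 𝕂 h - LinearMap.mulRight 𝕂 h) - c • LinearMap.id)

/-- `⊕_{i ≤ 0} g(2i, h)`, the sum of the nonpositive even eigenspaces of `ad h`. -/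
def negEvenPart (h : Matrix (Fin N) (Fin N) 𝕂) :
    Submodule 𝕂 (Matrix (Fin N) (Fin N) 𝕂) :=
  ⨆ i : {i : ℤ // i ≤ 0}, gSpace h ((2 * i.1 : ℤ) : 𝕂)

/-- A polynomial map `gl_N → gl_N`: each entry of the output is a polynomial function of
the entries of the input. -/
def IsPolyMap (φ : Matrix (Fin N) (Fin N) 𝕂 → Matrix (Fin N) (Fin N) 𝕂) : Prop :=
  ∃ P : (Fin N × Fin N) → MvPolynomial (Fin N × Fin N) 𝕂,
    ∀ (x : Matrix (Fin N) (Fin N) 𝕂) (r c : Fin N),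
      φ x r c = MvPolynomial.eval (fun rc : Fin N × Fin N => x rc.1 rc.2) (P (r, c))

end KatsyloSetup

open KatsyloSetup

/-!
Conjugating `x ∈ e + ⊕_{i ≤ 0} g(2i, h)` by `1 + u` with `u ∈ g(2i, h)`, `i < 0`, leaves the
components of weight above `2(i + 1)` unchanged and adds `[u, e]` to the one of weight `2(i + 1)`.
By sl2-theory, `ad f ∘ ad e` is bijective on `g(2i, h)`, so `u` can be chosen linearly in the
component of weight `2(i + 1)` so as to move that component into the centralizer of `f`. Successive
corrections for `i = -1, -2, …` push everything into that centralizer, since the weights of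
`ad h` are bounded.

Each correction commutes with the dilations `ρ_r` that scale `g(2i, h)` by `r ^ (1 - i)`. As
`ρ_r (e + t) = e + r t` for `t ∈ g(0, h)`, the component of weight `2j` is homogeneous of degree
`1 - j` in `t`.
-/

namespace KatsyloSetup

open Module

section Eigen

variable {K V : Type*} [Field K] [AddCommGroup V] [Module K V] [FiniteDimensional K V]

lemma exists_eq_zero_of_injective_weights (T : End K V) {μ : ℕ → K}
    (hμ : Function.Injective μ) {v : ℕ → V} (hv : ∀ k, T (v k) = μ k • v k) : ∃ k, v k = 0 := by
  by_contra! hne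
  refine Set.infinite_of_injective_forall_mem hμ (fun k => ?_) T.finite_hasEigenvalue
  exact End.hasEigenvalue_of_hasEigenvector ⟨End.mem_eigenspace_iff.mpr (hv k), hne k⟩

open scoped Classical in
/-- The functional calculus of `T` at the function `c`: the polynomial in `T` that acts as the
scalar `c μ` on the `μ`-eigenspace, obtained by interpolating `c` at the finitely many
eigenvalues. -/
noncomputable def eigenCalculus (T : End K V) (c : K → K) : End K V :=
  Polynomial.aeval T (Lagrange.interpolate T.finite_hasEigenvalue.toFinset id c)

open scoped Classical in
lemma eigenCalculus_apply (T : End K V) (c : K → K) {μ : K} {v : V}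
    (hv : v ∈ T.eigenspace μ) : eigenCalculus T c v = c μ • v := by
  by_cases hv0 : v = 0
  · simp [hv0]
  have hμ : μ ∈ T.finite_hasEigenvalue.toFinset := by
    simpa using End.hasEigenvalue_of_hasEigenvector ⟨hv, hv0⟩
  rw [eigenCalculus, End.aeval_apply_of_hasEigenvector ⟨hv, hv0⟩]
  exact congrArg (· • v) (Lagrange.eval_interpolate_at_node c (Set.injOn_id _) hμ)

end Eigen

section Sl2

open LieModule

section CommRing

variable {R L M : Type*} [CommRing R] [LieRing L] [LieAlgebra R L]
  [AddCommGroup M] [Module R M] [LieRingModule L M] [LieModule R L M]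
  {h e f : L} {μ : R} {m : M}

lemma lie_h_pow_toEnd_f (t : IsSl2Triple h e f) (hm : ⁅h, m⁆ = μ • m) (n : ℕ) :
    ⁅h, (toEnd R L M f ^ n) m⁆ = (μ - 2 * n) • (toEnd R L M f ^ n) m := by
  have := t.symm.lie_h_pow_toEnd_e (m := m) (μ := -μ) (by rw [neg_lie, hm, neg_smul]) n
  rw [← neg_inj, ← neg_lie, this, ← neg_smul]
  congr 1
  ring

lemma lie_e_pow_succ_toEnd_f_of_lie_f_lie_e_eq_zero (t : IsSl2Triple h e f)
    (hm : ⁅h, m⁆ = μ • m) (hfe : ⁅f, ⁅e, m⁆⁆ = 0) (n : ℕ) :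
    ⁅e, (toEnd R L M f ^ (n + 1)) m⁆ = ((n + 1) * (μ - n)) • (toEnd R L M f ^ n) m := by
  induction n with
  | zero => simp [leibniz_lie e, t.lie_e_f, hfe, hm]
  | succ n ih =>
    rw [pow_succ', End.mul_apply, toEnd_apply_apply, leibniz_lie e, t.lie_e_f,
      lie_h_pow_toEnd_f t hm, ih, lie_smul, ← toEnd_apply_apply R L M f, ← End.mul_apply,
      ← pow_succ', ← add_smul]
    congr 1
    push_cast
    ring

end CommRing

variable {K L M : Type*} [Field K] [CharZero K] [LieRing L] [LieAlgebra K L]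
  [AddCommGroup M] [Module K M] [FiniteDimensional K M] [LieRingModule L M] [LieModule K L M]
  {h e f : L} {μ : K} {m : M}

lemma exists_hasPrimitiveVectorWith_pow_toEnd_e
    (t : IsSl2Triple h e f) (hm : ⁅h, m⁆ = μ • m) (hm0 : m ≠ 0) :
    ∃ k : ℕ, t.HasPrimitiveVectorWith ((toEnd K L M e ^ k) m) (μ + 2 * k) := by
  have hweights : Function.Injective fun k : ℕ => μ + 2 * (k : K) := fun a b hab => by
    simpa using hab
  have hzero := exists_eq_zero_of_injective_weights (toEnd K L M h) hweights
    (t.lie_h_pow_toEnd_e hm)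
  obtain ⟨k, hk, hk_succ⟩ := Nat.exists_not_and_succ_of_not_zero_of_exists hm0 hzero
  exact ⟨k, hk, t.lie_h_pow_toEnd_e hm k, by rwa [IsSl2Triple.lie_e_pow_toEnd_e]⟩

lemma pow_toEnd_e_ne_zero (t : IsSl2Triple h e f) {a : ℕ}
    (hm : ⁅h, m⁆ = (-a : K) • m) (hm0 : m ≠ 0) : toEnd K L M e ^ a ≠ 0 := by
  obtain ⟨k, hk⟩ := exists_hasPrimitiveVectorWith_pow_toEnd_e t.symm (μ := (a : K))
    (by rw [neg_lie, hm, neg_smul, neg_neg]) hm0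
  have := hk.pow_toEnd_f_ne_zero_of_eq_nat (n := a + 2 * k) (by push_cast; rfl)
    (Nat.le_add_right a (2 * k))
  exact fun h0 => this (by rw [h0, LinearMap.zero_apply])

lemma eq_zero_of_lie_f_lie_e_eq_zero (t : IsSl2Triple h e f) {a : ℕ}
    (ha : 0 < a) (hm : ⁅h, m⁆ = (-a : K) • m) (hfe : ⁅f, ⁅e, m⁆⁆ = 0) : m = 0 := by
  by_contra hm0
  obtain ⟨k, hk⟩ := exists_hasPrimitiveVectorWith_pow_toEnd_e t.symm (μ := (a : K))
    (by rw [neg_lie, hm, neg_smul, neg_neg]) hm0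
  -- As `f ^ (k + 1) m = 0 ≠ f ^ k m`, the scalar `(k + 1) * (-a - k)` must vanish.
  have hcoeff := lie_e_pow_succ_toEnd_f_of_lie_f_lie_e_eq_zero t hm hfe k
  rw [pow_succ', End.mul_apply, toEnd_apply_apply, hk.lie_e, lie_zero, eq_comm,
    smul_eq_zero_iff_left hk.ne_zero, mul_eq_zero_iff_left k.cast_add_one_ne_zero,
    ← neg_add', neg_eq_zero] at hcoeff
  norm_cast at hcoeff
  lia

open Module.End in
lemma exists_linearMap_lie_f_sub_lie_e_eq_zero (t : IsSl2Triple h e f)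
    {a : ℕ} (ha : 0 < a) : ∃ S : M →ₗ[K] M, ∀ m : M, ⁅h, m⁆ = (2 - a : K) • m →
      ⁅h, S m⁆ = (-a : K) • S m ∧ ⁅f, m - ⁅e, S m⁆⁆ = 0 := by
  set W := (toEnd K L M h).eigenspace (-a : K)
  have hf : ∀ m : M, ⁅h, m⁆ = (2 - a : K) • m → ⁅f, m⁆ ∈ W := fun m hm => by
    have := lie_h_pow_toEnd_f t hm 1
    simp only [pow_one, toEnd_apply_apply, Nat.cast_one] at this
    rw [mem_eigenspace_iff, toEnd_apply_apply, this]
    congr 1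
    ring
  have he : ∀ m ∈ W, ⁅h, ⁅e, m⁆⁆ = (2 - a : K) • ⁅e, m⁆ := fun m hm => by
    have := t.lie_h_pow_toEnd_e (mem_eigenspace_iff.mp hm) 1
    simp only [pow_one, toEnd_apply_apply, Nat.cast_one] at this
    rw [this]
    congr 1
    ring
  let FE : W →ₗ[K] W :=
    (toEnd K L M f ∘ₗ toEnd K L M e).restrict fun m hm => hf _ (he m hm)
  have hFE : LinearMap.ker FE = ⊥ := LinearMap.ker_eq_bot'.mpr fun m hm =>
    Subtype.ext (eq_zero_of_lie_f_lie_e_eq_zero t ha (mem_eigenspace_iff.mp m.2)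
      (congrArg Subtype.val hm))
  obtain ⟨G, hG⟩ := LinearMap.exists_leftInverse_of_injective (W.subtype ∘ₗ FE)
    (by rw [LinearMap.ker_comp_of_ker_eq_bot _ W.ker_subtype, hFE])
  refine ⟨W.subtype ∘ₗ G ∘ₗ toEnd K L M f, fun m hm => ⟨mem_eigenspace_iff.mp (G _).2, ?_⟩⟩
  obtain ⟨w, hw⟩ := LinearMap.surjective_of_injective (LinearMap.ker_eq_bot.mp hFE) ⟨_, hf m hm⟩
  have hw : ⁅f, ⁅e, (w : M)⁆⁆ = ⁅f, m⁆ := congrArg Subtype.val hw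
  have hGw : G ⁅f, m⁆ = w := by
    rw [← hw]
    exact LinearMap.congr_fun hG w
  rw [lie_sub, sub_eq_zero, ← hw, ← hGw]
  rfl

end Sl2

attribute [local instance] LieRing.ofAssociativeRing

lemma ad_pow_two_mul_eq_zero {R A : Type*} [CommRing R] [Ring A] [Algebra R A] {x : A} {n : ℕ}
    (hx : x ^ n = 0) : LieAlgebra.ad R A x ^ (2 * n) = 0 := by
  have hcomm : Commute (LinearMap.mulLeft R x : End R A) (LinearMap.mulRight R x) :=
    LinearMap.commute_mulLeft_right x x
  have hleft : (LinearMap.mulLeft R x : End R A) ^ n = 0 := by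
    rw [LinearMap.pow_mulLeft, hx, LinearMap.mulLeft_zero_eq_zero]
  have hright : (-LinearMap.mulRight R x : End R A) ^ n = 0 := by
    rw [neg_pow, LinearMap.pow_mulRight, hx, LinearMap.mulRight_zero_eq_zero, mul_zero]
  rw [LieAlgebra.ad_eq_lmul_left_sub_lmul_right, Pi.sub_apply, sub_eq_add_neg]
  exact hcomm.neg_right.add_pow_eq_zero_of_add_le_succ_of_pow_eq_zero hleft hright (by lia)

section Unipotent

variable {R : Type*} [Ring R]

/-- The truncated geometric series `1 - u + u² - ⋯`, the inverse of `1 + u` when `u ^ n = 0`. -/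
def truncInv (n : ℕ) (u : R) : R := ∑ i ∈ Finset.range n, (-u) ^ i

lemma one_add_mul_truncInv {n : ℕ} {u : R} (hu : u ^ n = 0) : (1 + u) * truncInv n u = 1 := by
  rw [← sub_neg_eq_add, truncInv, mul_neg_geom_sum, neg_pow, hu, mul_zero, sub_zero]

lemma truncInv_mul_one_add {n : ℕ} {u : R} (hu : u ^ n = 0) : truncInv n u * (1 + u) = 1 := by
  rw [← sub_neg_eq_add, truncInv, geom_sum_mul_neg, neg_pow, hu, mul_zero, sub_zero]

/-- The conjugate `(1 + u) x (1 + u)⁻¹` of `x` by a unipotent element, for `u ^ n = 0`. The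
truncated series stands in for the inverse so that the result is a polynomial in `u` and `x` for
every `u`. -/
def unipotentConj (n : ℕ) (u x : R) : R := (1 + u) * x * truncInv n u

lemma exists_unipotentConj_eq {n : ℕ} {u : R} (hu : u ^ n = 0) (x : R) :
    ∃ g : Rˣ, unipotentConj n u x = g * x * (g⁻¹ : Rˣ) :=
  ⟨⟨1 + u, truncInv n u, one_add_mul_truncInv hu, truncInv_mul_one_add hu⟩, rfl⟩

lemma unipotentConj_sub {n : ℕ} {u : R} (hu : u ^ n = 0) (x y : R) :
    unipotentConj n u x - (x + ⁅u, y⁆) = ⁅u, x - y⁆ - ⁅u, x⁆ * u * truncInv n u := by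
  have hinv : truncInv n u = 1 - u * truncInv n u := by
    have := one_add_mul_truncInv hu
    rw [add_mul, one_mul] at this
    exact eq_sub_of_add_eq this
  have hx : x * ((1 + u) * truncInv n u) = x := by rw [one_add_mul_truncInv hu, mul_one]
  calc _ = ⁅u, x⁆ * truncInv n u - ⁅u, y⁆ + (x * ((1 + u) * truncInv n u) - x) := by
        simp only [unipotentConj, LieRing.of_associative_ring_bracket]; noncomm_ring
    _ = ⁅u, x⁆ * truncInv n u - ⁅u, y⁆ := by rw [hx, sub_self, add_zero]
    _ = ⁅u, x⁆ * (1 - u * truncInv n u) - ⁅u, y⁆ := by rw [← hinv]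
    _ = _ := by simp only [LieRing.of_associative_ring_bracket]; noncomm_ring

end Unipotent

section Matrix

variable {𝕂 : Type*} [Field 𝕂] {N : ℕ}

variable (𝕂 N) in
/-- The polynomial maps `gl_N → gl_N`, a ring for the pointwise operations (the product being the
matrix product of values). -/
def polyMapSubring : Subring (Matrix (Fin N) (Fin N) 𝕂 → Matrix (Fin N) (Fin N) 𝕂) where
  carrier := {φ | IsPolyMap φ}
  zero_mem' := ⟨0, by simp⟩
  one_mem' := ⟨fun rc => MvPolynomial.C ((1 : Matrix (Fin N) (Fin N) 𝕂) rc.1 rc.2), by simp⟩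
  add_mem' := by
    rintro φ ψ ⟨P, hP⟩ ⟨Q, hQ⟩
    exact ⟨P + Q, fun x r c => by simp [hP, hQ]⟩
  neg_mem' := by
    rintro φ ⟨P, hP⟩
    exact ⟨-P, fun x r c => by simp [hP]⟩
  mul_mem' := by
    rintro φ ψ ⟨P, hP⟩ ⟨Q, hQ⟩
    exact ⟨fun rc => ∑ k, P (rc.1, k) * Q (k, rc.2), fun x r c => by
      simp [hP, hQ, Matrix.mul_apply]⟩

lemma isPolyMap_id : IsPolyMap (id : Matrix (Fin N) (Fin N) 𝕂 → Matrix (Fin N) (Fin N) 𝕂) :=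
  ⟨MvPolynomial.X, by simp⟩

lemma IsPolyMap.linearMap_comp {φ : Matrix (Fin N) (Fin N) 𝕂 → Matrix (Fin N) (Fin N) 𝕂}
    (hφ : IsPolyMap φ) (S : Matrix (Fin N) (Fin N) 𝕂 →ₗ[𝕂] Matrix (Fin N) (Fin N) 𝕂) :
    IsPolyMap (S ∘ φ) := by
  obtain ⟨P, hP⟩ := hφ
  refine ⟨fun rc => ∑ i, ∑ j, P (i, j) * MvPolynomial.C (S (Matrix.single i j 1) rc.1 rc.2),
    fun x r c => ?_⟩
  have hsingle : φ x = ∑ i, ∑ j, φ x i j • Matrix.single i j (1 : 𝕂) := by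
    simpa using Matrix.matrix_eq_sum_single (φ x)
  rw [Function.comp_apply, hsingle]
  simp only [map_sum, map_smul, map_mul, Matrix.sum_apply, Matrix.smul_apply, smul_eq_mul, hP,
    MvPolynomial.eval_C]

lemma IsPolyMap.unipotentConj {φ υ : Matrix (Fin N) (Fin N) 𝕂 → Matrix (Fin N) (Fin N) 𝕂}
    (hυ : IsPolyMap υ) (hφ : IsPolyMap φ) (n : ℕ) :
    IsPolyMap fun x => unipotentConj n (υ x) (φ x) := by
  change υ ∈ polyMapSubring 𝕂 N at hυ
  have htrunc : truncInv n υ ∈ polyMapSubring 𝕂 N :=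
    sum_mem fun i _ => pow_mem (neg_mem hυ) i
  have hconj : KatsyloSetup.unipotentConj n υ φ ∈ polyMapSubring 𝕂 N :=
    mul_mem (mul_mem (add_mem (one_mem _) hυ) hφ) htrunc
  convert (show IsPolyMap _ from hconj) using 1
  funext x
  simp [KatsyloSetup.unipotentConj, truncInv]

section Grading

variable {e h u x y z : Matrix (Fin N) (Fin N) 𝕂} {i j k l : ℤ}

/-- The space `g(2i, h)`, indexed by half its weight. -/
abbrev evenSpace (h : Matrix (Fin N) (Fin N) 𝕂) (i : ℤ) :
    Submodule 𝕂 (Matrix (Fin N) (Fin N) 𝕂) :=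
  gSpace h ((2 * i : ℤ) : 𝕂)

/-- The space `⊕_{i ≤ k} g(2i, h)`; for `k = 0` this is `negEvenPart h`, and as `k` varies these
spaces form a multiplicative filtration. -/
def evenFiltration (h : Matrix (Fin N) (Fin N) 𝕂) (k : ℤ) :
    Submodule 𝕂 (Matrix (Fin N) (Fin N) 𝕂) :=
  ⨆ i : {i : ℤ // i ≤ k}, evenSpace h i

lemma mem_gSpace {c : 𝕂} : z ∈ gSpace h c ↔ ⁅h, z⁆ = c • z := by
  simp [gSpace, sub_eq_zero, LieRing.of_associative_ring_bracket]

lemma gSpace_zero (h : Matrix (Fin N) (Fin N) 𝕂) : gSpace h (0 : 𝕂) = evenSpace h 0 := by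
  simp [evenSpace]

lemma mem_evenSpace_one (hhe : ⁅h, e⁆ = (2 : 𝕂) • e) : e ∈ evenSpace h 1 := by
  simpa [mem_gSpace] using hhe

lemma mul_mem_gSpace {c d : 𝕂} (hx : x ∈ gSpace h c) (hy : y ∈ gSpace h d) :
    x * y ∈ gSpace h (c + d) := by
  rw [mem_gSpace, LieRing.of_associative_ring_bracket, sub_eq_iff_eq_add] at *
  rw [← mul_assoc, hx, add_mul, mul_assoc x, hy]
  simp only [mul_add, smul_mul_assoc, mul_smul_comm, add_smul, mul_assoc, add_assoc]

lemma mul_mem_evenSpace (hx : x ∈ evenSpace h i) (hy : y ∈ evenSpace h j) :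
    x * y ∈ evenSpace h (i + j) := by
  simpa [evenSpace, mul_add] using mul_mem_gSpace hx hy

lemma one_mem_evenSpace_zero : (1 : Matrix (Fin N) (Fin N) 𝕂) ∈ evenSpace h 0 := by
  simp [mem_gSpace, LieRing.of_associative_ring_bracket]

lemma pow_mem_evenSpace (hx : x ∈ evenSpace h i) (n : ℕ) : x ^ n ∈ evenSpace h (n * i) := by
  induction n with
  | zero => simpa using one_mem_evenSpace_zero
  | succ n ih =>
    rw [pow_succ, Nat.cast_add_one, add_one_mul]
    exact mul_mem_evenSpace ih hx

lemma evenSpace_le_evenFiltration (hik : i ≤ k) : evenSpace h i ≤ evenFiltration h k :=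
  le_iSup (fun i : {i : ℤ // i ≤ k} => evenSpace h i) ⟨i, hik⟩

lemma evenFiltration_le {S : Submodule 𝕂 (Matrix (Fin N) (Fin N) 𝕂)} :
    evenFiltration h k ≤ S ↔ ∀ i ≤ k, evenSpace h i ≤ S := by
  simp [evenFiltration]

lemma evenFiltration_mono (hkl : k ≤ l) : evenFiltration h k ≤ evenFiltration h l :=
  evenFiltration_le.mpr fun _ hi => evenSpace_le_evenFiltration (hi.trans hkl)

lemma mul_mem_evenFiltration (hx : x ∈ evenFiltration h k) (hy : y ∈ evenFiltration h l) :
    x * y ∈ evenFiltration h (k + l) := by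
  have hmul : evenFiltration h k * evenFiltration h l ≤ evenFiltration h (k + l) := by
    simp only [evenFiltration, Submodule.iSup_mul, Submodule.mul_iSup, iSup_le_iff]
    exact fun i j => Submodule.mul_le.mpr fun x hx y hy =>
      evenSpace_le_evenFiltration (add_le_add j.2 i.2) (mul_mem_evenSpace hx hy)
  exact hmul (Submodule.mul_mem_mul hx hy)

lemma lie_mem_evenFiltration (hx : x ∈ evenFiltration h k) (hy : y ∈ evenFiltration h l) :
    ⁅x, y⁆ ∈ evenFiltration h (k + l) :=
  sub_mem (mul_mem_evenFiltration hx hy) (add_comm k l ▸ mul_mem_evenFiltration hy hx)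

lemma eqOn_evenFiltration {S T : Matrix (Fin N) (Fin N) 𝕂 →ₗ[𝕂] Matrix (Fin N) (Fin N) 𝕂}
    (hST : ∀ i ≤ k, ∀ z ∈ evenSpace h i, S z = T z) :
    Set.EqOn S T (evenFiltration h k) :=
  LinearMap.le_eqLocus.mp (evenFiltration_le.mpr hST)

lemma one_mem_evenFiltration_zero : (1 : Matrix (Fin N) (Fin N) 𝕂) ∈ evenFiltration h 0 :=
  evenSpace_le_evenFiltration le_rfl one_mem_evenSpace_zero

lemma pow_mem_evenFiltration_zero (hx : x ∈ evenFiltration h 0) (n : ℕ) :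
    x ^ n ∈ evenFiltration h 0 := by
  induction n with
  | zero => simpa using one_mem_evenFiltration_zero
  | succ n ih => simpa [pow_succ] using mul_mem_evenFiltration ih hx

lemma truncInv_mem_evenFiltration_zero (hx : x ∈ evenFiltration h 0) (n : ℕ) :
    truncInv n x ∈ evenFiltration h 0 :=
  sum_mem fun i _ => pow_mem_evenFiltration_zero (neg_mem hx) i

lemma mem_evenFiltration_one_of_sub_mem (he : e ∈ evenSpace h 1)
    (hx : x - e ∈ evenFiltration h 0) : x ∈ evenFiltration h 1 := by
  simpa using add_mem (evenFiltration_mono zero_le_one hx) (evenSpace_le_evenFiltration le_rfl he)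

lemma unipotentConj_sub_mem_evenFiltration {n : ℕ} (hi : i < 0) (hun : u ^ n = 0)
    (hu : u ∈ evenSpace h i) (he : e ∈ evenSpace h 1) (hx : x - e ∈ evenFiltration h 0) :
    unipotentConj n u x - (x + ⁅u, e⁆) ∈ evenFiltration h i := by
  have hu := evenSpace_le_evenFiltration le_rfl hu
  have hlie := lie_mem_evenFiltration hu (mem_evenFiltration_one_of_sub_mem he hx)
  have htrunc := truncInv_mem_evenFiltration_zero (evenFiltration_mono hi.le hu) n
  rw [unipotentConj_sub hun]
  refine sub_mem (by simpa using lie_mem_evenFiltration hu hx) ?_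
  exact evenFiltration_mono (by lia)
    (mul_mem_evenFiltration (mul_mem_evenFiltration hlie hu) htrunc)

lemma lie_mem_evenSpace (hx : x ∈ evenSpace h i) (hy : y ∈ evenSpace h j) :
    ⁅x, y⁆ ∈ evenSpace h (i + j) :=
  sub_mem (mul_mem_evenSpace hx hy) (add_comm j i ▸ mul_mem_evenSpace hy hx)

lemma unipotentConj_sub_mem_evenFiltration_zero {n : ℕ} (hi : i < 0) (hun : u ^ n = 0)
    (hu : u ∈ evenSpace h i) (he : e ∈ evenSpace h 1) (hx : x - e ∈ evenFiltration h 0) :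
    unipotentConj n u x - e ∈ evenFiltration h 0 := by
  have hlie := evenSpace_le_evenFiltration (by lia : i + 1 ≤ 0) (lie_mem_evenSpace hu he)
  have hsub := evenFiltration_mono hi.le (unipotentConj_sub_mem_evenFiltration hi hun hu he hx)
  convert add_mem (add_mem hsub hlie) hx using 1
  abel

/-- A linear endomorphism of `gl_N` multiplying `g(2i, h)` by `a i` for every `i`. -/
noncomputable def evenScale (h : Matrix (Fin N) (Fin N) 𝕂) (a : ℤ → 𝕂) :
    End 𝕂 (Matrix (Fin N) (Fin N) 𝕂) :=
  eigenCalculus (LinearMap.mulLeft 𝕂 h - LinearMap.mulRight 𝕂 h)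
    (Function.extend (fun i : ℤ => ((2 * i : ℤ) : 𝕂)) a 0)

/-- The projection of `⊕_i g(2i, h)` onto `g(2j, h)`. -/
noncomputable def evenProj (h : Matrix (Fin N) (Fin N) 𝕂) (j : ℤ) :
    End 𝕂 (Matrix (Fin N) (Fin N) 𝕂) :=
  evenScale h (Pi.single j 1)

/-- The dilation of `⊕_{i ≤ k} g(2i, h)` multiplying `g(2i, h)` by `r ^ (k - i)`. For `k = 1` it
fixes `e` and contracts the slice `e + ⊕_{i ≤ 0} g(2i, h)` to `e`. -/
noncomputable def dilation (h : Matrix (Fin N) (Fin N) 𝕂) (k : ℤ) (r : 𝕂) :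
    End 𝕂 (Matrix (Fin N) (Fin N) 𝕂) :=
  evenScale h fun i => r ^ (k - i).toNat

variable [CharZero 𝕂]

lemma evenScale_apply (a : ℤ → 𝕂) (hz : z ∈ evenSpace h i) : evenScale h a z = a i • z := by
  have hinj : Function.Injective fun i : ℤ => ((2 * i : ℤ) : 𝕂) := fun i j hij => by
    simpa using hij
  rw [evenScale, eigenCalculus_apply (μ := ((2 * i : ℤ) : 𝕂)), hinj.extend_apply]
  exact End.mem_eigenspace_iff.mpr (mem_gSpace.mp hz)

lemma evenProj_apply_self (hz : z ∈ evenSpace h j) : evenProj h j z = z := by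
  rw [evenProj, evenScale_apply _ hz, Pi.single_eq_same, one_smul]

lemma evenProj_apply_of_ne (hz : z ∈ evenSpace h i) (hij : i ≠ j) : evenProj h j z = 0 := by
  rw [evenProj, evenScale_apply _ hz, Pi.single_eq_of_ne hij, zero_smul]

lemma evenProj_sub_of_ne (hy : y ∈ evenSpace h i) (hij : i ≠ j) (x : Matrix (Fin N) (Fin N) 𝕂) :
    evenProj h j (x - y) = evenProj h j x := by
  rw [map_sub, evenProj_apply_of_ne hy hij, sub_zero]

lemma dilation_apply (k : ℤ) (r : 𝕂) (hz : z ∈ evenSpace h i) :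
    dilation h k r z = r ^ (k - i).toNat • z :=
  evenScale_apply _ hz

lemma evenProj_mem_evenSpace (j : ℤ) (hz : z ∈ evenFiltration h k) :
    evenProj h j z ∈ evenSpace h j := by
  suffices evenFiltration h k ≤ (evenSpace h j).comap (evenProj h j) from this hz
  refine evenFiltration_le.mpr fun i _ z hz => ?_
  rw [Submodule.mem_comap, evenProj, evenScale_apply _ hz]
  rcases eq_or_ne i j with rfl | hij
  · exact Submodule.smul_mem _ _ hz
  · simp [hij]

lemma evenProj_eq_zero_of_lt (hkj : k < j) (hz : z ∈ evenFiltration h k) : evenProj h j z = 0 :=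
  eqOn_evenFiltration (T := 0)
    (fun _ hi _ hz => evenProj_apply_of_ne hz (hi.trans_lt hkj).ne) hz

lemma evenProj_dilation (j : ℤ) (r : 𝕂) (hz : z ∈ evenFiltration h k) :
    evenProj h j (dilation h l r z) = r ^ (l - j).toNat • evenProj h j z := by
  refine eqOn_evenFiltration (S := evenProj h j ∘ₗ dilation h l r)
    (T := r ^ (l - j).toNat • evenProj h j) (fun i _ z hz => ?_) hz
  rw [LinearMap.comp_apply, dilation_apply _ _ hz, map_smul, LinearMap.smul_apply]
  rcases eq_or_ne i j with rfl | hij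
  · rfl
  · simp [evenProj_apply_of_ne hz hij]

lemma dilation_mul (r : 𝕂) (hx : x ∈ evenFiltration h k) (hy : y ∈ evenFiltration h l) :
    dilation h (k + l) r (x * y) = dilation h k r x * dilation h l r y := by
  refine eqOn_evenFiltration (S := dilation h (k + l) r ∘ₗ LinearMap.mulRight 𝕂 y)
    (T := LinearMap.mulRight 𝕂 (dilation h l r y) ∘ₗ dilation h k r) (fun i hi x hx => ?_) hx
  refine eqOn_evenFiltration (S := dilation h (k + l) r ∘ₗ LinearMap.mulLeft 𝕂 x)
    (T := LinearMap.mulLeft 𝕂 (dilation h k r x) ∘ₗ dilation h l r) (fun j hj y hy => ?_) hy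
  have hexp : (k + l - (i + j)).toNat = (k - i).toNat + (l - j).toNat := by lia
  simp [dilation_apply _ r hx, dilation_apply _ r hy,
    dilation_apply _ r (mul_mem_evenSpace hx hy), hexp, pow_add, smul_smul, mul_comm]

lemma dilation_zero_one (r : 𝕂) : dilation h 0 r 1 = 1 := by
  simp [dilation_apply 0 r one_mem_evenSpace_zero]

lemma dilation_zero_pow (r : 𝕂) (hx : x ∈ evenFiltration h 0) (n : ℕ) :
    dilation h 0 r (x ^ n) = dilation h 0 r x ^ n := by
  induction n with
  | zero => simpa using dilation_zero_one r
  | succ n ih =>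
    have := dilation_mul r (pow_mem_evenFiltration_zero hx n) hx
    rwa [add_zero, ih, ← pow_succ, ← pow_succ] at this

lemma dilation_unipotentConj (r : 𝕂) (n : ℕ) (hu : u ∈ evenFiltration h 0)
    (hx : x ∈ evenFiltration h k) :
    dilation h k r (unipotentConj n u x) =
      unipotentConj n (dilation h 0 r u) (dilation h k r x) := by
  have htrunc : dilation h 0 r (truncInv n u) = truncInv n (dilation h 0 r u) := by
    simp only [truncInv, map_sum, dilation_zero_pow r (neg_mem hu), map_neg]
  have hu1 : 1 + u ∈ evenFiltration h 0 := add_mem one_mem_evenFiltration_zero hu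
  have hleft := dilation_mul r hu1 hx
  have hconj := dilation_mul r (mul_mem_evenFiltration hu1 hx)
    (truncInv_mem_evenFiltration_zero hu n)
  rw [zero_add] at hleft
  rw [zero_add, add_zero, hleft, htrunc, map_add, dilation_zero_one] at hconj
  exact hconj

lemma pow_eq_zero_of_mem_evenSpace (hi : i ≠ 0) (hx : x ∈ evenSpace h i) : x ^ N = 0 := by
  have hweights : Function.Injective fun n : ℕ => ((2 * (n * i) : ℤ) : 𝕂) := fun m n hmn => by
    simpa [hi] using hmn
  obtain ⟨n, hn⟩ := exists_eq_zero_of_injective_weights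
    (LinearMap.mulLeft 𝕂 h - LinearMap.mulRight 𝕂 h) hweights
    fun n => mem_gSpace.mp (pow_mem_evenSpace hx n)
  have hcharpoly : x.charpoly = Polynomial.X ^ N := by
    simpa [sub_eq_zero] using
      (Matrix.isNilpotent_charpoly_sub_pow_of_isNilpotent (IsNilpotent.mk x n hn)).eq_zero
  simpa [hcharpoly] using x.aeval_self_charpoly

lemma lie_evenProj_unipotentConj_sub_eq_zero {f : Matrix (Fin N) (Fin N) 𝕂} (hi : i < 0)
    (he : e ∈ evenSpace h 1) (hu : u ∈ evenSpace h i) (hx : x - e ∈ evenFiltration h 0)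
    (hcomm : ∀ j, i + 1 < j → ⁅f, evenProj h j (x - e)⁆ = 0)
    (hcorr : ⁅f, evenProj h (i + 1) (x - e) + ⁅u, e⁆⁆ = 0) (hij : i < j) :
    ⁅f, evenProj h j (unipotentConj N u x - e)⁆ = 0 := by
  have hlie := lie_mem_evenSpace hu he
  have hproj : evenProj h j (unipotentConj N u x - e) =
      evenProj h j (x - e) + evenProj h j ⁅u, e⁆ := by
    have := evenProj_eq_zero_of_lt hij <| unipotentConj_sub_mem_evenFiltration hi
      (pow_eq_zero_of_mem_evenSpace hi.ne hu) hu he hx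
    rw [← map_add, ← sub_eq_zero, ← map_sub, ← this]
    congr 1
    abel
  rw [hproj]
  rcases (Int.add_one_le_of_lt hij).eq_or_lt with rfl | hij
  · rwa [evenProj_apply_self hlie]
  · rw [evenProj_apply_of_ne hlie hij.ne, add_zero, hcomm j hij]

end Grading

section Contraction

variable [CharZero 𝕂] {e h f z : Matrix (Fin N) (Fin N) 𝕂} {i : ℤ}

lemma isSl2Triple_or_eq_zero (hhe : ⁅h, e⁆ = (2 : 𝕂) • e) (hhf : ⁅h, f⁆ = (-2 : 𝕂) • f)
    (hef : ⁅e, f⁆ = h) : IsSl2Triple h e f ∨ e = 0 ∧ h = 0 ∧ f = 0 := by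
  rcases eq_or_ne h 0 with rfl | hh
  · have he : e = 0 := by simpa using hhe.symm
    exact .inr ⟨he, rfl, by simpa [he] using hhf⟩
  · exact .inl ⟨hh, hef, by rw [hhe, ofNat_smul_eq_nsmul], by
      rw [hhf, neg_smul, ofNat_smul_eq_nsmul]⟩

section

variable (hhe : ⁅h, e⁆ = (2 : 𝕂) • e) (hhf : ⁅h, f⁆ = (-2 : 𝕂) • f) (hef : ⁅e, f⁆ = h)

include hhe hhf hef

lemma evenSpace_eq_bot (hi : i < -N) : evenSpace h i = ⊥ := by
  refine (Submodule.eq_bot_iff _).mpr fun z hz => ?_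
  have hz := mem_gSpace.mp hz
  by_contra hz0
  rcases isSl2Triple_or_eq_zero hhe hhf hef with t | ⟨-, rfl, -⟩
  · obtain ⟨a, ha⟩ : ∃ a : ℕ, 2 * i = -a := ⟨(-2 * i).toNat, by lia⟩
    have he : e ^ N = 0 := pow_eq_zero_of_mem_evenSpace one_ne_zero (mem_evenSpace_one hhe)
    have hne := pow_toEnd_e_ne_zero t (a := a) (by rw [hz, ha]; push_cast; rfl) hz0
    exact hne (pow_eq_zero_of_le (by lia) (ad_pow_two_mul_eq_zero (R := 𝕂) he))
  · rw [zero_lie, eq_comm, smul_eq_zero_iff_left hz0] at hz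
    norm_cast at hz
    lia

lemma sum_evenProj (hz : z ∈ evenFiltration h 0) :
    ∑ j ∈ Finset.Icc (-(N : ℤ)) 0, evenProj h j z = z := by
  rw [← LinearMap.sum_apply]
  refine eqOn_evenFiltration (T := LinearMap.id) (fun i hi z hz => ?_) hz
  rw [LinearMap.sum_apply, LinearMap.id_apply]
  by_cases hiN : i < -N
  · rw [evenSpace_eq_bot hhe hhf hef hiN, Submodule.mem_bot] at hz
    simp [hz]
  · rw [Finset.sum_eq_single i (fun j _ hj => evenProj_apply_of_ne hz hj.symm)
      (fun hmem => absurd (Finset.mem_Icc.mpr ⟨not_lt.mp hiN, hi⟩) hmem), evenProj_apply_self hz]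

lemma exists_linearMap_lie_f_add_lie_e_eq_zero (hi : i < 0) :
    ∃ S : End 𝕂 (Matrix (Fin N) (Fin N) 𝕂), ∀ z ∈ evenSpace h (i + 1),
      S z ∈ evenSpace h i ∧ ⁅f, z + ⁅S z, e⁆⁆ = 0 := by
  rcases isSl2Triple_or_eq_zero hhe hhf hef with t | ⟨rfl, rfl, rfl⟩
  · obtain ⟨a, ha⟩ : ∃ a : ℕ, 2 * i = -a := ⟨(-2 * i).toNat, by lia⟩
    obtain ⟨S, hS⟩ := exists_linearMap_lie_f_sub_lie_e_eq_zero (K := 𝕂)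
      (M := Matrix (Fin N) (Fin N) 𝕂) t (a := a) (by lia)
    refine ⟨S, fun z hz => ?_⟩
    have hz' : ⁅h, z⁆ = (2 - a : 𝕂) • z := by
      rw [mem_gSpace.mp hz, mul_add, ha]
      push_cast
      congr 1
      ring
    obtain ⟨hSz, hlie⟩ := hS z hz'
    refine ⟨mem_gSpace.mpr (by rw [hSz, ha]; push_cast; rfl), ?_⟩
    rwa [← lie_skew (S z), ← sub_eq_add_neg]
  · exact ⟨0, fun z _ => by simp⟩

end

/-- The `d`-th stage of the construction of the contraction map: a polynomial map `φ` such that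
`φ (e + z)` is a conjugate of `e + z` in `e + ⊕_{i ≤ 0} g(2i, h)`, whose components of weight above
`-2d` already commute with `f`. The condition `map_add_smul` encodes the homogeneity of the
components of `φ` on `e + g(0, h)`. -/
structure IsPartialContraction (e h f : Matrix (Fin N) (Fin N) 𝕂) (d : ℕ)
    (φ : Matrix (Fin N) (Fin N) 𝕂 → Matrix (Fin N) (Fin N) 𝕂) : Prop where
  isPolyMap : IsPolyMap φ
  sub_mem : ∀ z ∈ evenFiltration h 0, φ (e + z) - e ∈ evenFiltration h 0
  exists_conj : ∀ z ∈ evenFiltration h 0, ∃ g : (Matrix (Fin N) (Fin N) 𝕂)ˣ,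
    φ (e + z) = g * (e + z) * (g⁻¹ : (Matrix (Fin N) (Fin N) 𝕂)ˣ)
  map_add_smul : ∀ t ∈ evenSpace h 0, ∀ r : 𝕂, φ (e + r • t) = dilation h 1 r (φ (e + t))
  lie_evenProj : ∀ z ∈ evenFiltration h 0, ∀ j : ℤ, -d < j →
    ⁅f, evenProj h j (φ (e + z) - e)⁆ = 0

lemma isPartialContraction_id (he : e ∈ evenSpace h 1) : IsPartialContraction e h f 0 id where
  isPolyMap := isPolyMap_id
  sub_mem z hz := by simpa using hz
  exists_conj z _ := ⟨1, by simp⟩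
  map_add_smul t ht r := by simp [dilation_apply 1 r he, dilation_apply 1 r ht]
  lie_evenProj z hz j hj := by
    rw [id, add_sub_cancel_left, evenProj_eq_zero_of_lt (by simpa using hj) hz, lie_zero]

lemma IsPartialContraction.unipotentConj {d : ℕ} {S : End 𝕂 (Matrix (Fin N) (Fin N) 𝕂)}
    {φ : Matrix (Fin N) (Fin N) 𝕂 → Matrix (Fin N) (Fin N) 𝕂}
    (hφ : IsPartialContraction e h f d φ) (he : e ∈ evenSpace h 1)
    (hS : ∀ z ∈ evenSpace h (-d), S z ∈ evenSpace h (-(d + 1)) ∧ ⁅f, z + ⁅S z, e⁆⁆ = 0) :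
    IsPartialContraction e h f (d + 1)
      fun x => unipotentConj N (S (evenProj h (-d) (φ x))) (φ x) := by
  have hmem : ∀ z ∈ evenFiltration h 0, φ (e + z) ∈ evenFiltration h 1 :=
    fun z hz => mem_evenFiltration_one_of_sub_mem he (hφ.sub_mem z hz)
  have hSproj := fun z hz => hS _ (evenProj_mem_evenSpace (-d) (hmem z hz))
  have hd : -((d : ℤ) + 1) < 0 := by lia
  have hnil := fun z hz => pow_eq_zero_of_mem_evenSpace hd.ne (hSproj z hz).1
  refine ⟨?_, fun z hz => ?_, fun z hz => ?_, fun t ht r => ?_, fun z hz j hj => ?_⟩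
  · exact ((hφ.isPolyMap.linearMap_comp _).linearMap_comp S).unipotentConj hφ.isPolyMap N
  · exact unipotentConj_sub_mem_evenFiltration_zero hd (hnil z hz) (hSproj z hz).1 he
      (hφ.sub_mem z hz)
  · obtain ⟨g, hg⟩ := hφ.exists_conj z hz
    obtain ⟨g', hg'⟩ := exists_unipotentConj_eq (hnil z hz) (φ (e + z))
    exact ⟨g' * g, by rw [hg', hg]; simp [mul_assoc]⟩
  · have ht0 := evenSpace_le_evenFiltration le_rfl ht
    have hu := (hSproj t ht0).1
    have hexp : (1 - -(d : ℤ)).toNat = (0 - -((d : ℤ) + 1)).toNat := by lia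
    rw [hφ.map_add_smul t ht r, evenProj_dilation (-d) r (hmem t ht0), map_smul, hexp,
      ← dilation_apply 0 r hu, dilation_unipotentConj r N
      (evenSpace_le_evenFiltration hd.le hu) (hmem t ht0)]
  · refine lie_evenProj_unipotentConj_sub_eq_zero hd he (hSproj z hz).1 (hφ.sub_mem z hz)
      (fun j hj => hφ.lie_evenProj z hz j (by lia)) ?_ (by exact_mod_cast hj)
    rw [neg_add_rev, neg_add_cancel_comm, evenProj_sub_of_ne he (by lia)]
    exact (hSproj z hz).2

lemma exists_isPartialContraction (hhe : ⁅h, e⁆ = (2 : 𝕂) • e) (hhf : ⁅h, f⁆ = (-2 : 𝕂) • f)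
    (hef : ⁅e, f⁆ = h) (d : ℕ) : ∃ φ, IsPartialContraction e h f d φ := by
  have he := mem_evenSpace_one hhe
  induction d with
  | zero => exact ⟨id, isPartialContraction_id he⟩
  | succ d ih =>
    obtain ⟨φ, hφ⟩ := ih
    obtain ⟨S, hS⟩ := exists_linearMap_lie_f_add_lie_e_eq_zero hhe hhf hef
      (i := -(d + 1)) (by lia)
    exact ⟨_, hφ.unipotentConj he (by simpa using hS)⟩

lemma IsPartialContraction.lie_sub_eq_zero
    {φ : Matrix (Fin N) (Fin N) 𝕂 → Matrix (Fin N) (Fin N) 𝕂}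
    (hφ : IsPartialContraction e h f (N + 1) φ) (hhe : ⁅h, e⁆ = (2 : 𝕂) • e)
    (hhf : ⁅h, f⁆ = (-2 : 𝕂) • f) (hef : ⁅e, f⁆ = h) (hz : z ∈ evenFiltration h 0) :
    ⁅f, φ (e + z) - e⁆ = 0 := by
  rw [← sum_evenProj hhe hhf hef (hφ.sub_mem z hz), lie_sum]
  refine Finset.sum_eq_zero fun j hj => hφ.lie_evenProj z hz j ?_
  have := Finset.mem_Icc.mp hj
  lia

end Contraction

end Matrix
end KatsyloSetup

theorem katsylo_contraction_map_exists_general {𝕂 : Type*} [Field 𝕂] [CharZero 𝕂]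
    {N : ℕ} (e h f : Matrix (Fin N) (Fin N) 𝕂)
    (hhe : h * e - e * h = (2 : 𝕂) • e)
    (hhf : h * f - f * h = (-2 : 𝕂) • f)
    (hef : e * f - f * e = h) :
    ∃ (ε : Matrix (Fin N) (Fin N) 𝕂 → Matrix (Fin N) (Fin N) 𝕂)
      (P : ℤ → Matrix (Fin N) (Fin N) 𝕂 → Matrix (Fin N) (Fin N) 𝕂),
      IsPolyMap ε ∧
      (∀ z ∈ negEvenPart h,
        ε (e + z) - e ∈ negEvenPart h ∧ (ε (e + z) - e) * f = f * (ε (e + z) - e)) ∧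
      (∀ z ∈ negEvenPart h, ∃ g : (Matrix (Fin N) (Fin N) 𝕂)ˣ,
        ε (e + z) = (g : Matrix (Fin N) (Fin N) 𝕂) * (e + z) *
          ((g⁻¹ : (Matrix (Fin N) (Fin N) 𝕂)ˣ) : Matrix (Fin N) (Fin N) 𝕂)) ∧
      (∀ j : ℤ, j ≤ 0 → ∀ t ∈ gSpace h (0 : 𝕂), P j t ∈ gSpace h ((2 * j : ℤ) : 𝕂)) ∧
      (∀ t ∈ gSpace h (0 : 𝕂),
        ε (e + t) = e + ∑ j ∈ Finset.Icc (-(N : ℤ)) 0, P j t) ∧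
      (∀ j : ℤ, j ≤ 0 →
        (∀ t ∈ gSpace h (0 : 𝕂), P j t = 0) ∨
        (∀ t ∈ gSpace h (0 : 𝕂), ∀ lam : 𝕂,
          P j (lam • t) = lam ^ (1 - j).toNat • P j t)) := by
  have he := mem_evenSpace_one hhe
  obtain ⟨ε, hε⟩ := exists_isPartialContraction hhe hhf hef (N + 1)
  have hmem : ∀ z ∈ negEvenPart h, ε (e + z) ∈ evenFiltration h 1 :=
    fun z hz => mem_evenFiltration_one_of_sub_mem he (hε.sub_mem z hz)
  rw [gSpace_zero]
  have hneg : ∀ t ∈ evenSpace h 0, t ∈ negEvenPart h :=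
    fun t ht => evenSpace_le_evenFiltration le_rfl ht
  refine ⟨ε, fun j t => evenProj h j (ε (e + t)), hε.isPolyMap, fun z hz => ⟨hε.sub_mem z hz, ?_⟩,
    hε.exists_conj, fun j _ t ht => evenProj_mem_evenSpace j (hmem t (hneg t ht)),
    fun t ht => ?_, fun j _ => .inr fun t ht r => ?_⟩
  · exact (sub_eq_zero.mp (hε.lie_sub_eq_zero hhe hhf hef hz)).symm
  · rw [← sub_eq_iff_eq_add', ← sum_evenProj hhe hhf hef (hε.sub_mem t (hneg t ht))]
    exact Finset.sum_congr rfl fun j hj =>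
      evenProj_sub_of_ne he ((Finset.mem_Icc.mp hj).2.trans_lt one_pos).ne' _
  · beta_reduce
    rw [hε.map_add_smul t ht r, evenProj_dilation j r (hmem t (hneg t ht))]

theorem katsylo_contraction_map_exists {𝕂 : Type*} [Field 𝕂] [IsAlgClosed 𝕂] [CharZero 𝕂]
    {N : ℕ} (e h f : Matrix (Fin N) (Fin N) 𝕂)
    (hhe : h * e - e * h = (2 : 𝕂) • e)
    (hhf : h * f - f * h = (-2 : 𝕂) • f)
    (hef : e * f - f * e = h) :
    ∃ (ε : Matrix (Fin N) (Fin N) 𝕂 → Matrix (Fin N) (Fin N) 𝕂)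
      (P : ℤ → Matrix (Fin N) (Fin N) 𝕂 → Matrix (Fin N) (Fin N) 𝕂),
      -- `ε` is a polynomial map
      IsPolyMap ε ∧
      -- `ε` maps `e + ⊕_{i≤0} g(2i,h)` into `e + (g^f ∩ ⊕_{i≤0} g(2i,h))`
      (∀ z ∈ negEvenPart h,
        ε (e + z) - e ∈ negEvenPart h ∧ (ε (e + z) - e) * f = f * (ε (e + z) - e)) ∧
      -- (i) `ε (e+z)` is conjugate to `e+z`
      (∀ z ∈ negEvenPart h, ∃ g : (Matrix (Fin N) (Fin N) 𝕂)ˣ,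
        ε (e + z) = (g : Matrix (Fin N) (Fin N) 𝕂) * (e + z) *
          ((g⁻¹ : (Matrix (Fin N) (Fin N) 𝕂)ˣ) : Matrix (Fin N) (Fin N) 𝕂)) ∧
      -- (ii) on `e + g(0,h)`, `ε` decomposes as `e + Σ_{j ≤ 0} P_j` with `P_j` valued in
      -- `g(2j, h)` and either zero or homogeneous of degree `−j+1`
      (∀ j : ℤ, j ≤ 0 → ∀ t ∈ gSpace h (0 : 𝕂), P j t ∈ gSpace h ((2 * j : ℤ) : 𝕂)) ∧
      (∀ t ∈ gSpace h (0 : 𝕂),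
        ε (e + t) = e + ∑ j ∈ Finset.Icc (-(N : ℤ)) 0, P j t) ∧
      (∀ j : ℤ, j ≤ 0 →
        (∀ t ∈ gSpace h (0 : 𝕂), P j t = 0) ∨
        (∀ t ∈ gSpace h (0 : 𝕂), ∀ lam : 𝕂,
          P j (lam • t) = lam ^ (1 - j).toNat • P j t)) :=
  katsylo_contraction_map_exists_general e h f hhe hhf hef
end

section
/- For the principal sl2-triple of gl_N there is a conjugating map with symmetric homogeneous components: there exists a map ε : e^reg + h → e^reg + g^{f^reg} such that ε(e^reg + t) is GL_N-conjugate to e^reg + t for every diagonal matrix t, and ε(e^reg + t) = e^reg + Σ_{j ≤ 0} P_j(t), where each P_j : h → f^{(−j)} takes values in the (−j)-th subdiagonal space and is either zero or a homogeneous polynomial map of degree −j+1 which is symmetric in the diagonal entries of t (invariant under any permutation of the eigenvalues of t). -/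
/-! For the principal sl2-triple of `gl_N` there is a conjugating map
`ε(e^reg + t) = e^reg + Σ_{j≤0} P_j(t)` whose homogeneous components `P_j` take values in
the `(−j)`-th subdiagonal and are symmetric in the eigenvalues of `t`. -/

namespace PrincipalSetup

variable (𝕂 : Type*) [Field 𝕂] (N : ℕ)

/-- The regular nilpotent matrix: `e^reg · v_j = v_{j−1}`. -/
def ereg : Matrix (Fin N) (Fin N) 𝕂 :=
  Matrix.of fun r c => if (r : ℕ) + 1 = (c : ℕ) then 1 else 0

/-- The element `f^reg` of the principal sl2-triple: `f^reg · v_j = j(N − j) v_{j+1}`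
(`1`-indexed `j`). -/
def freg : Matrix (Fin N) (Fin N) 𝕂 :=
  Matrix.of fun r c =>
    if (r : ℕ) = (c : ℕ) + 1 then ((((c : ℕ) + 1) * (N - ((c : ℕ) + 1)) : ℕ) : 𝕂) else 0

end PrincipalSetup

open PrincipalSetup

/-! Write `e + b` for the set of matrices that differ from `e = e^reg` by a lower triangular one.
A matrix in `e + b` has a cyclic vector, so it is conjugate to a companion matrix in `e + b`.
If two matrices of `e + b` agree above the `k`-th subdiagonal, then the traces of their
`(k + 1)`-st powers differ by `k + 1` times the trace of `e ^ k` against their difference. For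
companion matrices this shows that the traces of powers determine the conjugacy class of a matrix
in `e + b`. For the slice elements `e + ∑ c_i f ^ i` it shows that the trace of the `(k + 1)`-st
power is a nonzero multiple of `c_k` plus a polynomial in the `c_i` with `i < k`, so the `c_k` can
be solved for recursively from the power sums of `t`; this makes them symmetric and homogeneous. -/

namespace PrincipalSlice

open Matrix MvPolynomial

section Filtration

variable {R : Type*} {N : ℕ}

/-- The filtration of `N × N` matrices by subdiagonals: `lowerFiltration R N a` consists of the
matrices supported on the positions `(r, c)` with `r - c ≥ a`. -/
def lowerFiltration (R : Type*) [Semiring R] (N : ℕ) (a : ℤ) :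
    Submodule R (Matrix (Fin N) (Fin N) R) where
  carrier := {A | ∀ r c : Fin N, (r : ℤ) < c + a → A r c = 0}
  add_mem' hA hB r c h := by rw [Matrix.add_apply, hA r c h, hB r c h, add_zero]
  zero_mem' _ _ _ := rfl
  smul_mem' x _ hA r c h := by rw [Matrix.smul_apply, hA r c h, smul_zero]

section Semiring

variable [Semiring R] {a b m : ℤ} {A B : Matrix (Fin N) (Fin N) R}

lemma mem_lowerFiltration :
    A ∈ lowerFiltration R N a ↔ ∀ r c : Fin N, (r : ℤ) < c + a → A r c = 0 :=
  Iff.rfl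

lemma lowerFiltration_anti (h : a ≤ b) : lowerFiltration R N b ≤ lowerFiltration R N a :=
  fun _ hA r c _ => hA r c (by omega)

lemma mul_mem_lowerFiltration (hA : A ∈ lowerFiltration R N a) (hB : B ∈ lowerFiltration R N b)
    (h : m ≤ a + b) : A * B ∈ lowerFiltration R N m := by
  refine mem_lowerFiltration.2 fun r c hrc => ?_
  rw [mul_apply]
  refine Finset.sum_eq_zero fun x _ => ?_
  rcases lt_or_ge (r : ℤ) (x + a) with hrx | hrx
  · rw [hA r x hrx, zero_mul]
  · rw [hB x c (by omega), mul_zero]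

lemma diagonal_mem_lowerFiltration (d : Fin N → R) : diagonal d ∈ lowerFiltration R N 0 :=
  fun _ _ h => diagonal_apply_ne d fun hrc => by simp [hrc] at h

lemma pow_mem_lowerFiltration (hA : A ∈ lowerFiltration R N a) (j : ℕ) :
    A ^ j ∈ lowerFiltration R N (j * a) := by
  induction j with
  | zero => simpa using diagonal_mem_lowerFiltration (1 : Fin N → R)
  | succ j ih =>
    rw [pow_succ]
    exact mul_mem_lowerFiltration ih hA (by push_cast; linarith)

lemma eq_zero_of_mem_lowerFiltration (hA : A ∈ lowerFiltration R N a) (h : N ≤ a) : A = 0 := by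
  ext r c
  exact hA r c (by omega)

lemma trace_eq_zero_of_mem_lowerFiltration (hA : A ∈ lowerFiltration R N 1) : A.trace = 0 :=
  Finset.sum_eq_zero fun i _ => hA i i (by omega)

end Semiring

section Ring

variable [Ring R] {a b : ℤ} {A B : Matrix (Fin N) (Fin N) R}

lemma mem_lowerFiltration_of_sub_mem (hAB : A - B ∈ lowerFiltration R N b)
    (hB : B ∈ lowerFiltration R N a) (h : a ≤ b) : A ∈ lowerFiltration R N a := by
  simpa using add_mem (lowerFiltration_anti h hAB) hB

lemma pow_sub_pow_mem_lowerFiltration (hA : A ∈ lowerFiltration R N a)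
    (hB : B ∈ lowerFiltration R N a) (hAB : A - B ∈ lowerFiltration R N (a + 1)) (j : ℕ) :
    A ^ j - B ^ j ∈ lowerFiltration R N (j * a + 1) := by
  induction j with
  | zero => simp
  | succ j ih =>
    have step : A ^ (j + 1) - B ^ (j + 1) = A * (A ^ j - B ^ j) + (A - B) * B ^ j := by
      rw [pow_succ', pow_succ']
      noncomm_ring
    rw [step]
    exact add_mem (mul_mem_lowerFiltration hA ih (by push_cast; linarith))
      (mul_mem_lowerFiltration hAB (pow_mem_lowerFiltration hB j) (by push_cast; linarith))

lemma isUnit_of_sub_one_mem_lowerFiltration (hA : A - 1 ∈ lowerFiltration R N 1) : IsUnit A := by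
  have nilpotent : IsNilpotent (A - 1) :=
    ⟨N, eq_zero_of_mem_lowerFiltration (pow_mem_lowerFiltration hA N) (by simp)⟩
  simpa using nilpotent.isUnit_one_add

lemma pow_succ_sub_pow_succ_eq_sum {S : Type*} [Ring S] (x y : S) (k : ℕ) :
    x ^ (k + 1) - y ^ (k + 1) = ∑ i ∈ Finset.range (k + 1), x ^ i * (x - y) * y ^ (k - i) := by
  have telescope := Finset.sum_range_sub (fun i => x ^ i * y ^ (k + 1 - i)) (k + 1)
  simp only [Nat.sub_self, pow_zero, mul_one, one_mul, Nat.sub_zero] at telescope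
  rw [← telescope]
  refine Finset.sum_congr rfl fun i hi => ?_
  have hik : k + 1 - i = k - i + 1 := by grind
  rw [hik, Nat.add_sub_add_right, pow_succ, pow_succ', mul_sub, sub_mul]
  simp only [mul_assoc]

end Ring

lemma trace_pow_succ_sub_trace_pow_succ [CommRing R] {E A B : Matrix (Fin N) (Fin N) R} {k : ℕ}
    (hE : E ∈ lowerFiltration R N (-1)) (hA : A - E ∈ lowerFiltration R N 0)
    (hB : B - E ∈ lowerFiltration R N 0) (hAB : A - B ∈ lowerFiltration R N k) :
    (A ^ (k + 1)).trace - (B ^ (k + 1)).trace = (k + 1) * (E ^ k * (A - B)).trace := by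
  have hA' := mem_lowerFiltration_of_sub_mem hA hE (by omega)
  have hB' := mem_lowerFiltration_of_sub_mem hB hE (by omega)
  have trace_term (i : ℕ) (hi : i ∈ Finset.range (k + 1)) :
      (A ^ i * (A - B) * B ^ (k - i)).trace = (E ^ k * (A - B)).trace := by
    have hik : k - i + i = k := by grind
    have leading : A ^ i * (A - B) * B ^ (k - i) - E ^ i * (A - B) * E ^ (k - i) =
        (A ^ i - E ^ i) * ((A - B) * B ^ (k - i)) +
          E ^ i * ((A - B) * (B ^ (k - i) - E ^ (k - i))) := by noncomm_ring
    have small : A ^ i * (A - B) * B ^ (k - i) - E ^ i * (A - B) * E ^ (k - i) ∈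
        lowerFiltration R N 1 := by
      rw [leading]
      have hAi := pow_sub_pow_mem_lowerFiltration hA' hE (by simpa using hA) i
      have hBi := pow_sub_pow_mem_lowerFiltration hB' hE (by simpa using hB) (k - i)
      exact add_mem
        (mul_mem_lowerFiltration hAi (mul_mem_lowerFiltration hAB
          (pow_mem_lowerFiltration hB' (k - i)) le_rfl) (by omega))
        (mul_mem_lowerFiltration (pow_mem_lowerFiltration hE i)
          (mul_mem_lowerFiltration hAB hBi le_rfl) (by omega))
    have trace_eq := trace_eq_zero_of_mem_lowerFiltration small
    rw [trace_sub, sub_eq_zero] at trace_eq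
    rw [trace_eq, trace_mul_comm, ← mul_assoc, ← pow_add, hik]
  rw [← trace_sub, pow_succ_sub_pow_succ_eq_sum, trace_sum, Finset.sum_congr rfl trace_term]
  simp

end Filtration

section RegularNilpotent

variable {𝕂 : Type*} [Field 𝕂] {N : ℕ}

lemma ereg_mem_lowerFiltration : ereg 𝕂 N ∈ lowerFiltration 𝕂 N (-1) :=
  fun _ _ h => if_neg (by omega)

lemma freg_mem_lowerFiltration : freg 𝕂 N ∈ lowerFiltration 𝕂 N 1 :=
  fun _ _ h => if_neg (by omega)

lemma freg_pow_mem_lowerFiltration (k : ℕ) : freg 𝕂 N ^ k ∈ lowerFiltration 𝕂 N k := by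
  simpa using pow_mem_lowerFiltration (freg_mem_lowerFiltration (𝕂 := 𝕂) (N := N)) k

lemma ereg_mul_apply (D : Matrix (Fin N) (Fin N) 𝕂) (r c : Fin N) :
    (ereg 𝕂 N * D) r c = if h : (r : ℕ) + 1 < N then D ⟨r + 1, h⟩ c else 0 := by
  simp only [mul_apply, ereg, of_apply, ite_mul, one_mul, zero_mul]
  split_ifs with h
  · rw [Finset.sum_eq_single ⟨r + 1, h⟩ (by grind) (by simp), if_pos rfl]
  · exact Finset.sum_eq_zero fun x _ => if_neg (by omega)

lemma mul_ereg_apply (D : Matrix (Fin N) (Fin N) 𝕂) {r c c' : Fin N} (h : (c' : ℕ) + 1 = c) :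
    (D * ereg 𝕂 N) r c = D r c' := by
  simp only [mul_apply, ereg, of_apply, mul_ite, mul_one, mul_zero]
  rw [Finset.sum_eq_single c' (by grind) (by simp), if_pos h]

lemma ereg_pow_mul_apply (k : ℕ) (D : Matrix (Fin N) (Fin N) 𝕂) (r c : Fin N) :
    (ereg 𝕂 N ^ k * D) r c = if h : (r : ℕ) + k < N then D ⟨r + k, h⟩ c else 0 := by
  induction k generalizing D with
  | zero => simp
  | succ k ih =>
    rw [pow_succ, mul_assoc, ih]
    simp only [ereg_mul_apply]
    grind

lemma freg_apply (r c : Fin N) : freg 𝕂 N r c =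
    if (r : ℕ) = c + 1 then (((c + 1) * (N - (c + 1)) : ℕ) : 𝕂) else 0 :=
  rfl

lemma freg_pow_apply (k : ℕ) (r c : Fin N) :
    (freg 𝕂 N ^ k) r c = if (r : ℕ) = c + k then
      ((∏ i ∈ Finset.range k, (c + i + 1) * (N - (c + i + 1)) : ℕ) : 𝕂) else 0 := by
  induction k generalizing r c with
  | zero => simp [one_apply, Fin.ext_iff]
  | succ k ih =>
    rw [pow_succ', mul_apply]
    simp only [ih, mul_ite, mul_zero, freg_apply]
    split_ifs with h
    · rw [Finset.sum_eq_single (⟨c + k, by omega⟩ : Fin N) (by grind) (by simp), if_pos rfl,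
        if_pos (show (r : ℕ) = c + k + 1 from h), Finset.prod_range_succ]
      push_cast
      ring
    · exact Finset.sum_eq_zero fun x _ => by grind

lemma freg_pow_apply_eq_zero {k : ℕ} {r c : Fin N} (h : (r : ℕ) ≠ c + k) :
    (freg 𝕂 N ^ k) r c = 0 := by
  rw [freg_pow_apply, if_neg h]

lemma trace_ereg_pow_mul_freg_pow_ne_zero [CharZero 𝕂] {k : ℕ} (hk : k < N) :
    (ereg 𝕂 N ^ k * freg 𝕂 N ^ k).trace ≠ 0 := by
  have trace_eq : (ereg 𝕂 N ^ k * freg 𝕂 N ^ k).trace = ((∑ r : Fin N, if (r : ℕ) + k < N then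
      ∏ i ∈ Finset.range k, (r + i + 1) * (N - (r + i + 1)) else 0 : ℕ) : 𝕂) := by
    push_cast
    refine Finset.sum_congr rfl fun r _ => ?_
    simp [ereg_pow_mul_apply, freg_pow_apply]
  rw [trace_eq, Nat.cast_ne_zero]
  refine (Finset.sum_pos' (fun _ _ => Nat.zero_le _)
    ⟨⟨0, by omega⟩, Finset.mem_univ _, ?_⟩).ne'
  rw [if_pos (by simpa using hk)]
  exact Finset.prod_pos fun i hi => by
    have := Finset.mem_range.1 hi
    exact Nat.mul_pos (by omega) (by simp; omega)

lemma trace_ereg_add_diagonal_pow (d : Fin N → 𝕂) (m : ℕ) :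
    ((ereg 𝕂 N + diagonal d) ^ m).trace = ∑ i, d i ^ m := by
  have hE : (ereg 𝕂 N)ᵀ ∈ lowerFiltration 𝕂 N 1 := fun _ _ h => if_neg (by omega)
  have hd := diagonal_mem_lowerFiltration d
  have hA : (ereg 𝕂 N)ᵀ + diagonal d ∈ lowerFiltration 𝕂 N 0 :=
    add_mem (lowerFiltration_anti (by omega) hE) hd
  have trace_eq := trace_eq_zero_of_mem_lowerFiltration <| by
    simpa only [mul_zero, zero_add] using
      pow_sub_pow_mem_lowerFiltration hA hd (by simpa using hE) m
  rw [trace_sub, sub_eq_zero, diagonal_pow, trace_diagonal] at trace_eq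
  rw [← trace_transpose, transpose_pow, transpose_add, diagonal_transpose, trace_eq]
  rfl

end RegularNilpotent

section Conjugacy

variable {𝕂 : Type*} [Field 𝕂] {N : ℕ}

lemma trace_pow_eq_of_isConj {R n : Type*} [CommRing R] [Fintype n] [DecidableEq n]
    {A B : Matrix n n R} (h : IsConj A B) (m : ℕ) : (A ^ m).trace = (B ^ m).trace := by
  obtain ⟨g, hg⟩ := h.pow m
  rw [← trace_units_conj g (A ^ m), hg.eq, Units.mul_inv_cancel_right]

/-- The matrix whose columns are `A ^ (N - 1) v, …, A v, v`, where `v` is the last basis vector. -/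
def krylovMatrix {R : Type*} [Semiring R] (A : Matrix (Fin N) (Fin N) R) :
    Matrix (Fin N) (Fin N) R :=
  of fun r c => (A ^ (N - 1 - c : ℕ)) r ⟨N - 1, Nat.sub_one_lt_of_lt c.2⟩

lemma mul_krylovMatrix_apply (A : Matrix (Fin N) (Fin N) 𝕂) (r : Fin N) {c : Fin N}
    (hc : (c : ℕ) ≠ 0) : (A * krylovMatrix A) r c = (krylovMatrix A * ereg 𝕂 N) r c := by
  rw [mul_ereg_apply _ (c' := ⟨c - 1, by omega⟩) (Nat.sub_add_cancel (by omega))]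
  have hpow : N - 1 - (c - 1) = N - 1 - c + 1 := by omega
  simp only [krylovMatrix, of_apply, hpow, pow_succ', mul_apply]

lemma krylovMatrix_sub_one_mem_lowerFiltration {A : Matrix (Fin N) (Fin N) 𝕂}
    (hA : A - ereg 𝕂 N ∈ lowerFiltration 𝕂 N 0) : krylovMatrix A - 1 ∈ lowerFiltration 𝕂 N 1 := by
  have hA' := mem_lowerFiltration_of_sub_mem hA ereg_mem_lowerFiltration (by omega)
  refine mem_lowerFiltration.2 fun r c hrc => ?_
  have hN : N - 1 < N := by omega
  have hpow : A ^ (N - 1 - c) - ereg 𝕂 N ^ (N - 1 - c) ∈ lowerFiltration 𝕂 N (c + 2 - N) := by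
    simpa [show ((N - 1 - c : ℕ) : ℤ) = N - 1 - c by omega] using
      lowerFiltration_anti (by omega) (pow_sub_pow_mem_lowerFiltration hA' ereg_mem_lowerFiltration
        (by simpa using hA) (N - 1 - c))
  have entry_eq := hpow r ⟨N - 1, hN⟩ (by dsimp only; omega)
  have hE : (ereg 𝕂 N ^ (N - 1 - c)) r ⟨N - 1, hN⟩ = (1 : Matrix _ _ 𝕂) r c := by
    rw [← mul_one (ereg 𝕂 N ^ _), ereg_pow_mul_apply]
    simp only [one_apply, Fin.ext_iff]
    grind
  rwa [Matrix.sub_apply, hE] at entry_eq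

/-- Companion matrices, normalized so that only the first column differs from that of `ereg`. -/
def IsCompanion (C : Matrix (Fin N) (Fin N) 𝕂) : Prop :=
  ∀ r c : Fin N, (c : ℕ) ≠ 0 → C r c = ereg 𝕂 N r c

lemma exists_isConj_companion {A : Matrix (Fin N) (Fin N) 𝕂}
    (hA : A - ereg 𝕂 N ∈ lowerFiltration 𝕂 N 0) :
    ∃ C, IsConj A C ∧ IsCompanion C := by
  obtain ⟨P, hP⟩ := isUnit_of_sub_one_mem_lowerFiltration
    (krylovMatrix_sub_one_mem_lowerFiltration hA)
  refine ⟨P⁻¹.val * A * P, ⟨P⁻¹, by simp [SemiconjBy, mul_assoc]⟩, fun r c hc => ?_⟩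
  calc (P⁻¹.val * A * P) r c = ∑ x, P⁻¹.val r x * (A * krylovMatrix A) x c := by
        rw [mul_assoc, mul_apply, hP]
    _ = ∑ x, P⁻¹.val r x * (P.val * ereg 𝕂 N) x c := by
        simp only [mul_krylovMatrix_apply A _ hc, hP]
    _ = ereg 𝕂 N r c := by rw [← mul_apply, Units.inv_mul_cancel_left]

lemma IsCompanion.sub_ereg_mem_lowerFiltration {C : Matrix (Fin N) (Fin N) 𝕂}
    (hC : IsCompanion C) :
    C - ereg 𝕂 N ∈ lowerFiltration 𝕂 N 0 :=
  fun r c h => sub_eq_zero.2 (hC r c (by omega))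

lemma trace_ereg_pow_mul_of_firstColumn {k : ℕ} (hk : k < N) {D : Matrix (Fin N) (Fin N) 𝕂}
    (hD : ∀ r c : Fin N, (c : ℕ) ≠ 0 → D r c = 0) :
    (ereg 𝕂 N ^ k * D).trace = D ⟨k, hk⟩ ⟨0, by omega⟩ := by
  rw [trace, Finset.sum_eq_single ⟨0, by omega⟩ _ (by simp)]
  · simp [ereg_pow_mul_apply, hk]
  · intro c _ hc
    rw [diag_apply, ereg_pow_mul_apply]
    split_ifs with h
    · exact hD _ c fun h0 => hc (Fin.ext h0)
    · rfl

lemma IsCompanion.eq_of_trace_pow_eq [CharZero 𝕂] {C D : Matrix (Fin N) (Fin N) 𝕂}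
    (hC : IsCompanion C) (hD : IsCompanion D)
    (htr : ∀ k < N, (C ^ (k + 1)).trace = (D ^ (k + 1)).trace) : C = D := by
  have diff_col (r c : Fin N) (hc : (c : ℕ) ≠ 0) : (C - D) r c = 0 := by
    rw [Matrix.sub_apply, hC r c hc, hD r c hc, sub_self]
  have diff_mem (k : ℕ) (hk : k ≤ N) : C - D ∈ lowerFiltration 𝕂 N k := by
    induction k with
    | zero => simpa using sub_mem hC.sub_ereg_mem_lowerFiltration hD.sub_ereg_mem_lowerFiltration
    | succ k ih =>
      have hCD := ih (by omega)
      have trace_eq := trace_pow_succ_sub_trace_pow_succ ereg_mem_lowerFiltration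
        hC.sub_ereg_mem_lowerFiltration hD.sub_ereg_mem_lowerFiltration hCD
      rw [htr k hk, sub_self, trace_ereg_pow_mul_of_firstColumn hk diff_col, zero_eq_mul,
        or_iff_right (Nat.cast_add_one_ne_zero k)] at trace_eq
      refine mem_lowerFiltration.2 fun r c hrc => ?_
      by_cases hc : (c : ℕ) = 0
      · rcases eq_or_ne (r : ℕ) k with hr | hr
        · have hr' : r = ⟨k, hk⟩ := Fin.ext hr
          have hc' : c = ⟨0, by omega⟩ := Fin.ext hc
          rw [hr', hc', trace_eq]
        · exact hCD r c (by omega)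
      · exact diff_col r c hc
  exact sub_eq_zero.1 (eq_zero_of_mem_lowerFiltration (diff_mem N le_rfl) le_rfl)

lemma isConj_of_trace_pow_eq [CharZero 𝕂] {A B : Matrix (Fin N) (Fin N) 𝕂}
    (hA : A - ereg 𝕂 N ∈ lowerFiltration 𝕂 N 0) (hB : B - ereg 𝕂 N ∈ lowerFiltration 𝕂 N 0)
    (htr : ∀ k < N, (A ^ (k + 1)).trace = (B ^ (k + 1)).trace) : IsConj A B := by
  obtain ⟨C, hAC, hC⟩ := exists_isConj_companion hA
  obtain ⟨D, hBD, hD⟩ := exists_isConj_companion hB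
  have hCD : C = D := hC.eq_of_trace_pow_eq hD fun k hk => by
    rw [← trace_pow_eq_of_isConj hAC, ← trace_pow_eq_of_isConj hBD, htr k hk]
  exact hAC.trans (hCD ▸ hBD.symm)

end Conjugacy

section Homogeneity

variable {σ R : Type*} [CommSemiring R] {N : ℕ}

lemma eval_smul_of_isHomogeneous {p : MvPolynomial σ R} {n : ℕ} (hp : p.IsHomogeneous n) (x : R)
    (d : σ → R) : eval (x • d) p = x ^ n * eval d p := by
  rw [eval_eq, eval_eq, Finset.mul_sum]
  refine Finset.sum_congr rfl fun s hs => ?_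
  simp only [Pi.smul_apply, smul_eq_mul, mul_pow, Finset.prod_mul_distrib,
    Finset.prod_pow_eq_pow_sum, ← hp.degree_eq_sum_deg_support hs]
  ring

lemma isHomogeneous_psum [Fintype σ] (n : ℕ) : (psum σ R n).IsHomogeneous n :=
  IsHomogeneous.sum _ _ _ fun i _ => isHomogeneous_X_pow i n

/-- Matrices of polynomials that are homogeneous of degree `m` for the grading in which a constant
matrix supported on the `k`-th subdiagonal has degree `-k`: the `(r, c)` entry is homogeneous of
degree `m + r - c`, and vanishes if this is negative. -/
def IsGradedMatrix (m : ℕ) (A : Matrix (Fin N) (Fin N) (MvPolynomial σ R)) : Prop :=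
  ∀ r c : Fin N, (∀ n, r + m = c + n → (A r c).IsHomogeneous n) ∧ ((r : ℕ) + m < c → A r c = 0)

namespace IsGradedMatrix

variable {m n : ℕ} {A B : Matrix (Fin N) (Fin N) (MvPolynomial σ R)}

lemma one : IsGradedMatrix 0 (1 : Matrix (Fin N) (Fin N) (MvPolynomial σ R)) := by
  intro r c
  rcases eq_or_ne r c with rfl | hrc
  · refine ⟨fun n hn => ?_, by simp⟩
    obtain rfl : n = 0 := by omega
    simpa using isHomogeneous_one σ R
  · simp [hrc, isHomogeneous_zero]

lemma mul (hA : IsGradedMatrix m A) (hB : IsGradedMatrix n B) : IsGradedMatrix (m + n) (A * B) := by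
  intro r c
  rw [mul_apply]
  refine ⟨fun l hl => IsHomogeneous.sum _ _ _ fun x _ => ?_,
    fun hrc => Finset.sum_eq_zero fun x _ => ?_⟩
  · rcases lt_or_ge (r + m : ℕ) x with hrx | hrx
    · simp [(hA r x).2 hrx, isHomogeneous_zero]
    rcases lt_or_ge (x + n : ℕ) c with hxc | hxc
    · simp [(hB x c).2 hxc, isHomogeneous_zero]
    obtain ⟨i, hi⟩ := Nat.exists_eq_add_of_le hrx
    obtain ⟨j, hj⟩ := Nat.exists_eq_add_of_le hxc
    obtain rfl : l = i + j := by omega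
    exact ((hA r x).1 i hi).mul ((hB x c).1 j hj)
  · rcases lt_or_ge (r + m : ℕ) x with hrx | hrx
    · rw [(hA r x).2 hrx, zero_mul]
    · rw [(hB x c).2 (by omega), mul_zero]

lemma pow (hA : IsGradedMatrix m A) (j : ℕ) : IsGradedMatrix (j * m) (A ^ j) := by
  induction j with
  | zero => simpa using one
  | succ j ih =>
    rw [pow_succ, Nat.succ_mul]
    exact ih.mul hA

lemma isHomogeneous_trace (hA : IsGradedMatrix m A) : A.trace.IsHomogeneous m :=
  IsHomogeneous.sum _ _ _ fun i _ => (hA i i).1 m rfl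

end IsGradedMatrix

end Homogeneity

section Slice

variable (𝕂 : Type*) [Field 𝕂] (N : ℕ)

/-- The element `e + ∑ c_i f ^ i` of the slice `e + g^f`, with coefficients in a `𝕂`-algebra. -/
def slice {R : Type*} [CommRing R] [Algebra 𝕂 R] {n : ℕ} (c : Fin n → R) :
    Matrix (Fin N) (Fin N) R :=
  (ereg 𝕂 N).map (algebraMap 𝕂 R) + ∑ i, c i • (freg 𝕂 N ^ (i : ℕ)).map (algebraMap 𝕂 R)

/-- The coefficients of the slice element conjugate to `e + t`, as polynomials in the diagonal
entries of `t`. They solve the equations saying that the `(k + 1)`-st power of the slice element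
has trace `psum (k + 1)`. -/
noncomputable def sliceCoeff (k : ℕ) : MvPolynomial (Fin N) 𝕂 :=
  ((k + 1) * (ereg 𝕂 N ^ k * freg 𝕂 N ^ k).trace)⁻¹ •
    (psum (Fin N) 𝕂 (k + 1) - (slice 𝕂 N (fun i : Fin k => sliceCoeff i) ^ (k + 1)).trace)
decreasing_by exact i.2

variable {𝕂 N} {R S : Type*} [CommRing R] [Algebra 𝕂 R] [CommRing S] [Algebra 𝕂 S]

lemma slice_map (φ : R →ₐ[𝕂] S) {n : ℕ} (c : Fin n → R) :
    (slice 𝕂 N c).map φ = slice 𝕂 N fun i => φ (c i) := by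
  ext r s
  simp [slice, Matrix.sum_apply]

lemma slice_eq_ereg_add_sum_range (n : ℕ) (c : ℕ → 𝕂) :
    slice 𝕂 N (fun i : Fin n => c i) = ereg 𝕂 N + ∑ i ∈ Finset.range n, c i • freg 𝕂 N ^ i := by
  rw [Finset.sum_range, slice]
  simp

lemma slice_sub_ereg_mem_lowerFiltration (n : ℕ) (c : ℕ → 𝕂) :
    slice 𝕂 N (fun i : Fin n => c i) - ereg 𝕂 N ∈ lowerFiltration 𝕂 N 0 := by
  rw [slice_eq_ereg_add_sum_range, add_sub_cancel_left]
  exact sum_mem fun i _ => Submodule.smul_mem _ _ <|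
    lowerFiltration_anti (by omega) (freg_pow_mem_lowerFiltration i)

lemma trace_slice_pow_sub_trace_slice_pow {k n : ℕ} (hk : k < n) (c : ℕ → 𝕂) :
    (slice 𝕂 N (fun i : Fin n => c i) ^ (k + 1)).trace -
        (slice 𝕂 N (fun i : Fin k => c i) ^ (k + 1)).trace =
      (k + 1) * (ereg 𝕂 N ^ k * freg 𝕂 N ^ k).trace * c k := by
  set tail := ∑ i ∈ Finset.Ico (k + 1) n, c i • freg 𝕂 N ^ i with htail
  have diff : slice 𝕂 N (fun i : Fin n => c i) - slice 𝕂 N (fun i : Fin k => c i) =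
      c k • freg 𝕂 N ^ k + tail := by
    rw [slice_eq_ereg_add_sum_range, slice_eq_ereg_add_sum_range,
      ← Finset.sum_range_add_sum_Ico _ hk.le, Finset.sum_eq_sum_Ico_succ_bot hk, htail]
    abel
  have tail_mem : tail ∈ lowerFiltration 𝕂 N (k + 1) := sum_mem fun i hi =>
    Submodule.smul_mem _ _ <| lowerFiltration_anti (by have := Finset.mem_Ico.1 hi; omega)
      (freg_pow_mem_lowerFiltration i)
  have trace_tail : (ereg 𝕂 N ^ k * tail).trace = 0 :=
    trace_eq_zero_of_mem_lowerFiltration <|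
      mul_mem_lowerFiltration (pow_mem_lowerFiltration ereg_mem_lowerFiltration k) tail_mem
        (by omega)
  have head_mem : c k • freg 𝕂 N ^ k ∈ lowerFiltration 𝕂 N k :=
    Submodule.smul_mem _ _ (freg_pow_mem_lowerFiltration k)
  have diff_mem := add_mem head_mem (lowerFiltration_anti (by omega) tail_mem)
  rw [trace_pow_succ_sub_trace_pow_succ ereg_mem_lowerFiltration
    (slice_sub_ereg_mem_lowerFiltration n c) (slice_sub_ereg_mem_lowerFiltration k c)
    (diff ▸ diff_mem), diff, mul_add, trace_add, trace_tail, Matrix.mul_smul, trace_smul,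
    smul_eq_mul]
  ring

lemma map_sliceCoeff (φ : MvPolynomial (Fin N) 𝕂 →ₐ[𝕂] R) (k : ℕ) :
    φ (sliceCoeff 𝕂 N k) = ((k + 1) * (ereg 𝕂 N ^ k * freg 𝕂 N ^ k).trace)⁻¹ •
      (φ (psum (Fin N) 𝕂 (k + 1)) -
        (slice 𝕂 N (fun i : Fin k => φ (sliceCoeff 𝕂 N i)) ^ (k + 1)).trace) := by
  rw [sliceCoeff, map_smul, map_sub, AddMonoidHom.map_trace φ, ← slice_map,
    ← AlgHom.mapMatrix_apply, ← AlgHom.mapMatrix_apply, map_pow]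

lemma sliceCoeff_isSymmetric (k : ℕ) : (sliceCoeff 𝕂 N k).IsSymmetric := by
  intro σ
  induction k using Nat.strong_induction_on with
  | _ k ih =>
    rw [map_sliceCoeff, rename_psum, sliceCoeff, funext fun i : Fin k => ih i i.2]

lemma isGradedMatrix_slice {σ : Type*} {n : ℕ} {c : Fin n → MvPolynomial σ 𝕂}
    (hc : ∀ i, (c i).IsHomogeneous (i + 1)) : IsGradedMatrix 1 (slice 𝕂 N c) := by
  intro r s
  have entry : slice 𝕂 N c r s = C (ereg 𝕂 N r s) +
      ∑ i : Fin n, C ((freg 𝕂 N ^ (i : ℕ)) r s) * c i := by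
    simp [slice, Matrix.sum_apply, mul_comm, algebraMap_eq]
  rw [entry]
  refine ⟨fun m hm => IsHomogeneous.add ?_ (IsHomogeneous.sum _ _ _ fun i _ => ?_), fun hrs => ?_⟩
  · rcases eq_or_ne ((r : ℕ) + 1) s with h | h
    · obtain rfl : m = 0 := by omega
      exact isHomogeneous_C _ _
    · simp [ereg, h, isHomogeneous_zero]
  · rcases eq_or_ne (r : ℕ) (s + i) with h | h
    · obtain rfl : m = i + 1 := by omega
      exact (hc i).C_mul _
    · simp [freg_pow_apply_eq_zero h, isHomogeneous_zero]
  · rw [ereg, of_apply, if_neg hrs.ne, map_zero, zero_add]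
    exact Finset.sum_eq_zero fun i _ => by
      rw [freg_pow_apply_eq_zero (by omega), map_zero, zero_mul]

lemma sliceCoeff_isHomogeneous (k : ℕ) : (sliceCoeff 𝕂 N k).IsHomogeneous (k + 1) := by
  induction k using Nat.strong_induction_on with
  | _ k ih =>
    have graded := (isGradedMatrix_slice (N := N) fun i : Fin k => ih i i.2).pow (k + 1)
    rw [mul_one] at graded
    rw [sliceCoeff, smul_eq_C_mul]
    exact ((isHomogeneous_psum (k + 1)).sub graded.isHomogeneous_trace).C_mul _

lemma trace_slice_sliceCoeff_pow [CharZero 𝕂] (d : Fin N → 𝕂) {k : ℕ} (hk : k < N) :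
    (slice 𝕂 N (fun i : Fin N => eval d (sliceCoeff 𝕂 N i)) ^ (k + 1)).trace =
      ∑ i, d i ^ (k + 1) := by
  have leading_ne_zero : (k + 1) * (ereg 𝕂 N ^ k * freg 𝕂 N ^ k).trace ≠ 0 :=
    mul_ne_zero (Nat.cast_add_one_ne_zero k) (trace_ereg_pow_mul_freg_pow_ne_zero hk)
  have coeff_eq := map_sliceCoeff (aeval d : MvPolynomial (Fin N) 𝕂 →ₐ[𝕂] 𝕂) k
  have trace_sub := trace_slice_pow_sub_trace_slice_pow (N := N) hk
    fun i => eval d (sliceCoeff 𝕂 N i)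
  simp only [aeval_eq_eval] at coeff_eq
  rw [coeff_eq, smul_eq_mul, mul_inv_cancel_left₀ leading_ne_zero, sub_left_inj] at trace_sub
  rw [trace_sub]
  simp [psum]

lemma isConj_slice_sliceCoeff [CharZero 𝕂] (d : Fin N → 𝕂) :
    IsConj (ereg 𝕂 N + diagonal d) (slice 𝕂 N fun i : Fin N => eval d (sliceCoeff 𝕂 N i)) := by
  have slice_mem := slice_sub_ereg_mem_lowerFiltration (N := N) N fun i => eval d (sliceCoeff 𝕂 N i)
  refine isConj_of_trace_pow_eq ?_ slice_mem fun k hk => ?_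
  · simpa using diagonal_mem_lowerFiltration d
  · rw [trace_ereg_add_diagonal_pow, trace_slice_sliceCoeff_pow d hk]

/-- The component `P_j`, for `j ≤ 0`, of the map to the slice. Truncation of `-j` makes it equal
to `P_0` for `j > 0`. -/
noncomputable def sliceComponent (j : ℤ) (d : Fin N → 𝕂) : Matrix (Fin N) (Fin N) 𝕂 :=
  eval d (sliceCoeff 𝕂 N (-j).toNat) • freg 𝕂 N ^ (-j).toNat

lemma sum_Icc_neg_toNat {M : Type*} [AddCommMonoid M] (n : ℕ) (F : ℕ → M) :
    ∑ j ∈ Finset.Icc (-(n : ℤ)) 0, F (-j).toNat = ∑ i ∈ Finset.range (n + 1), F i :=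
  Finset.sum_nbij' (fun j => (-j).toNat) (fun i => -(i : ℤ)) (by simp; omega) (by simp)
    (by simp; omega) (by simp) (by simp)

lemma ereg_add_sum_sliceComponent (d : Fin N → 𝕂) :
    ereg 𝕂 N + ∑ j ∈ Finset.Icc (-(N : ℤ)) 0, sliceComponent j d =
      slice 𝕂 N fun i : Fin N => eval d (sliceCoeff 𝕂 N i) := by
  have freg_pow_eq_zero : freg 𝕂 N ^ N = 0 :=
    eq_zero_of_mem_lowerFiltration (freg_pow_mem_lowerFiltration N) le_rfl
  simp only [sliceComponent]
  rw [sum_Icc_neg_toNat N fun i => eval d (sliceCoeff 𝕂 N i) • freg 𝕂 N ^ i,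
    Finset.sum_range_succ, freg_pow_eq_zero, smul_zero, add_zero,
    slice_eq_ereg_add_sum_range N fun i => eval d (sliceCoeff 𝕂 N i)]

end Slice

end PrincipalSlice

theorem principal_slice_map_symmetric_general {𝕂 : Type*} [Field 𝕂] [CharZero 𝕂] (N : ℕ) :
    ∃ P : ℤ → (Fin N → 𝕂) → Matrix (Fin N) (Fin N) 𝕂,
      (∀ j : ℤ, ∃ Q : (Fin N × Fin N) → MvPolynomial (Fin N) 𝕂,
        ∀ (d : Fin N → 𝕂) (r c : Fin N), P j d r c = MvPolynomial.eval d (Q (r, c))) ∧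
      (∀ j : ℤ, j ≤ 0 → ∀ (d : Fin N → 𝕂) (r c : Fin N),
        (r : ℕ) ≠ (c : ℕ) + (-j).toNat → P j d r c = 0) ∧
      (∀ d : Fin N → 𝕂,
        (∑ j ∈ Finset.Icc (-(N : ℤ)) 0, P j d) * freg 𝕂 N =
          freg 𝕂 N * (∑ j ∈ Finset.Icc (-(N : ℤ)) 0, P j d)) ∧
      (∀ d : Fin N → 𝕂, ∃ g : (Matrix (Fin N) (Fin N) 𝕂)ˣ,
        ereg 𝕂 N + ∑ j ∈ Finset.Icc (-(N : ℤ)) 0, P j d =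
          (g : Matrix (Fin N) (Fin N) 𝕂) * (ereg 𝕂 N + Matrix.diagonal d) *
            ((g⁻¹ : (Matrix (Fin N) (Fin N) 𝕂)ˣ) : Matrix (Fin N) (Fin N) 𝕂)) ∧
      (∀ j : ℤ, j ≤ 0 →
        (∀ d : Fin N → 𝕂, P j d = 0) ∨
        (∀ (d : Fin N → 𝕂) (lam : 𝕂), P j (lam • d) = lam ^ (1 - j).toNat • P j d)) ∧
      (∀ (j : ℤ) (d : Fin N → 𝕂) (σ : Equiv.Perm (Fin N)), P j (d ∘ σ) = P j d) := by
  open PrincipalSlice in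
  refine ⟨sliceComponent, fun j => ?_, fun j _ d r c hrc => ?_, fun d => ?_, fun d => ?_,
    fun j hj => .inr fun d x => ?_, fun j d σ => ?_⟩
  · exact ⟨fun p => (freg 𝕂 N ^ (-j).toNat) p.1 p.2 • sliceCoeff 𝕂 N (-j).toNat, fun d r c => by
      simp [sliceComponent, mul_comm]⟩
  · rw [sliceComponent, Matrix.smul_apply, freg_pow_apply_eq_zero hrc, smul_zero]
  · exact Commute.sum_left _ _ _ fun j _ => ((Commute.refl _).pow_left _).smul_left _
  · obtain ⟨g, hg⟩ := isConj_slice_sliceCoeff d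
    exact ⟨g, by rw [ereg_add_sum_sliceComponent, hg.eq, Units.mul_inv_cancel_right]⟩
  · rw [sliceComponent, eval_smul_of_isHomogeneous (sliceCoeff_isHomogeneous _), mul_smul,
      show (1 - j).toNat = (-j).toNat + 1 by omega, sliceComponent]
  · rw [sliceComponent, ← MvPolynomial.eval_rename, sliceCoeff_isSymmetric, sliceComponent]

theorem principal_slice_map_symmetric {𝕂 : Type*} [Field 𝕂] [IsAlgClosed 𝕂] [CharZero 𝕂]
    (N : ℕ) :
    ∃ P : ℤ → (Fin N → 𝕂) → Matrix (Fin N) (Fin N) 𝕂,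
      -- each `P_j` is a polynomial map of the diagonal entries
      (∀ j : ℤ, ∃ Q : (Fin N × Fin N) → MvPolynomial (Fin N) 𝕂,
        ∀ (d : Fin N → 𝕂) (r c : Fin N), P j d r c = MvPolynomial.eval d (Q (r, c))) ∧
      -- `P_j` takes values in the `(−j)`-th subdiagonal `f^{(−j)}`
      (∀ j : ℤ, j ≤ 0 → ∀ (d : Fin N → 𝕂) (r c : Fin N),
        (r : ℕ) ≠ (c : ℕ) + (-j).toNat → P j d r c = 0) ∧
      -- the value of `ε` lies in `e^reg + g^{f^reg}`
      (∀ d : Fin N → 𝕂,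
        (∑ j ∈ Finset.Icc (-(N : ℤ)) 0, P j d) * freg 𝕂 N =
          freg 𝕂 N * (∑ j ∈ Finset.Icc (-(N : ℤ)) 0, P j d)) ∧
      -- `ε(e^reg + t)` is conjugate to `e^reg + t`
      (∀ d : Fin N → 𝕂, ∃ g : (Matrix (Fin N) (Fin N) 𝕂)ˣ,
        ereg 𝕂 N + ∑ j ∈ Finset.Icc (-(N : ℤ)) 0, P j d =
          (g : Matrix (Fin N) (Fin N) 𝕂) * (ereg 𝕂 N + Matrix.diagonal d) *
            ((g⁻¹ : (Matrix (Fin N) (Fin N) 𝕂)ˣ) : Matrix (Fin N) (Fin N) 𝕂)) ∧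
      -- each `P_j` is zero or homogeneous of degree `−j+1`
      (∀ j : ℤ, j ≤ 0 →
        (∀ d : Fin N → 𝕂, P j d = 0) ∨
        (∀ (d : Fin N → 𝕂) (lam : 𝕂), P j (lam • d) = lam ^ (1 - j).toNat • P j d)) ∧
      -- each `P_j` is symmetric in the eigenvalues of `t`
      (∀ (j : ℤ) (d : Fin N → 𝕂) (σ : Equiv.Perm (Fin N)), P j (d ∘ σ) = P j d) :=
  principal_slice_map_symmetric_general N
end

section
/- Let x and y be diagonal N×N matrices and e^reg the regular nilpotent matrix. Then e^reg + x and e^reg + y are GL_N-conjugate if and only if there exists a permutation σ of {1,…,N} with y_{jj} = x_{σ(j)σ(j)} for all j (i.e. x and y have the same multiset of diagonal entries). -/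
open PrincipalSetup

/-!
Let `A` have ones on the superdiagonal and zeros above it. Then `v₁ A ^ k`, for the first standard
row vector `v₁`, equals `v_{k + 1}` up to a combination of `v₁, …, v_k`. So the matrix with rows
`v₁, v₁ A, …, v₁ A ^ (N - 1)` is unitriangular, and by Cayley–Hamilton it conjugates `A` to the
companion matrix of its characteristic polynomial. Such matrices are therefore conjugate, over any
commutative ring, exactly when their characteristic polynomials agree. For `e^reg + x` the
characteristic polynomial is `∏ (X - x_jj)`, which over a domain determines the diagonal entries
up to order.
-/

theorem isConj_iff_exists_eq_mul_mul_inv {M : Type*} [Monoid M] {a b : M} :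
    IsConj a b ↔ ∃ g : Mˣ, b = g * a * (g⁻¹ : Mˣ) :=
  exists_congr fun g => eq_comm.trans (Units.eq_mul_inv_iff_mul_eq g).symm

theorem map_univ_val_eq_iff_exists_perm {α β : Type*} [Fintype α] {f g : α → β} :
    Finset.univ.val.map f = Finset.univ.val.map g ↔ ∃ σ : Equiv.Perm α, ∀ i, g i = f (σ i) := by
  classical
  constructor
  · intro h
    have card_fiber (b : β) : Fintype.card {i // g i = b} = Fintype.card {i // f i = b} := by
      have := congrArg (Multiset.count b) h
      simp only [Multiset.count_map, eq_comm (a := b)] at this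
      rw [Fintype.card_subtype, Fintype.card_subtype]
      exact this.symm
    let e (b : β) : {i // g i = b} ≃ {i // f i = b} := Fintype.equivOfCardEq (card_fiber b)
    exact ⟨Equiv.ofFiberEquiv e, fun i => (Equiv.ofFiberEquiv_map e i).symm⟩
  · rintro ⟨σ, hσ⟩
    rw [funext hσ, ← Function.comp_def, ← Multiset.map_map, Multiset.map_univ_val_equiv]

open Polynomial in
theorem prod_X_sub_C_eq_iff_exists_perm {ι R : Type*} [Fintype ι] [CommRing R] [IsDomain R]
    {a b : ι → R} :
    ∏ i, (X - C (a i)) = ∏ i, (X - C (b i)) ↔ ∃ σ : Equiv.Perm ι, ∀ i, b i = a (σ i) := by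
  have prod_eq (c : ι → R) :
      ∏ i, (X - C (c i)) = ((Finset.univ.val.map c).map fun r => X - C r).prod := by
    rw [Multiset.map_map]
    rfl
  have prod_injective : Function.Injective fun s : Multiset R => (s.map fun r => X - C r).prod :=
    Function.LeftInverse.injective (g := roots) roots_multiset_prod_X_sub_C
  rw [prod_eq a, prod_eq b, prod_injective.eq_iff, map_univ_val_eq_iff_exists_perm]

section Krylov

open Matrix Polynomial

/-- The Krylov matrix of a row vector `v` under `A`, with rows `v, v A, …, v A ^ (N - 1)`.
It intertwines `A` with a companion matrix. -/
def krylov {R n : Type*} [Semiring R] [Fintype n] [DecidableEq n] (N : ℕ) (v : n → R)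
    (A : Matrix n n R) : Matrix (Fin N) n R :=
  of fun k => v ᵥ* A ^ (k : ℕ)

/-- The companion matrix of a monic polynomial `p` of degree `N`, in the form with ones on the
superdiagonal and the negated coefficients of `p` in the last row. The size `N` is an explicit
argument, rather than `p.natDegree`, to avoid casts between matrix sizes. -/
def companion {R : Type*} [Ring R] (N : ℕ) (p : R[X]) : Matrix (Fin N) (Fin N) R :=
  of fun i j => if (i : ℕ) + 1 = N then -p.coeff j else if (i : ℕ) + 1 = j then 1 else 0

variable {R n : Type*} [CommRing R] [Fintype n] [DecidableEq n]

theorem vecMul_pow_natDegree_of_vecMul_aeval_eq_zero {A : Matrix n n R} {v : n → R} {p : R[X]}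
    (hp : p.Monic) (hv : v ᵥ* aeval A p = 0) :
    v ᵥ* A ^ p.natDegree = ∑ j : Fin p.natDegree, -p.coeff j • v ᵥ* A ^ (j : ℕ) := by
  rw [aeval_eq_sum_range, Finset.sum_range_succ, hp.coeff_natDegree, one_smul, vecMul_add,
    vecMul_sum, Finset.sum_range] at hv
  simpa only [vecMul_smul, neg_smul, Finset.sum_neg_distrib] using eq_neg_of_add_eq_zero_right hv

theorem vecMul_pow_succ_eq_sum_companion {N : ℕ} {A : Matrix n n R} {v : n → R} {p : R[X]}
    (hp : p.Monic) (hN : p.natDegree = N) (hv : v ᵥ* aeval A p = 0) (i : Fin N) :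
    v ᵥ* A ^ ((i : ℕ) + 1) = ∑ j : Fin N, companion N p i j • v ᵥ* A ^ (j : ℕ) := by
  subst hN
  by_cases hi : (i : ℕ) + 1 = p.natDegree
  · simpa [companion, hi] using vecMul_pow_natDegree_of_vecMul_aeval_eq_zero hp hv
  · let next : Fin p.natDegree := ⟨i + 1, by omega⟩
    rw [Finset.sum_eq_single next]
    · simp [companion, hi, next]
    · intro j _ hj
      have : (i : ℕ) + 1 ≠ j := fun h => hj (Fin.ext h.symm)
      simp [companion, hi, this]
    · simp

theorem krylov_mul_eq_companion_mul {N : ℕ} {A : Matrix n n R} {v : n → R} {p : R[X]}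
    (hp : p.Monic) (hN : p.natDegree = N) (hv : v ᵥ* aeval A p = 0) :
    krylov N v A * A = companion N p * krylov N v A := by
  refine funext fun i => ?_
  calc (krylov N v A * A) i
      = v ᵥ* A ^ ((i : ℕ) + 1) := by
        rw [mul_apply_eq_vecMul, pow_succ, ← vecMul_vecMul]
        rfl
    _ = ∑ j : Fin N, companion N p i j • v ᵥ* A ^ (j : ℕ) :=
        vecMul_pow_succ_eq_sum_companion hp hN hv i
    _ = (companion N p * krylov N v A) i := by
        rw [mul_apply_eq_vecMul, vecMul_eq_sum]
        rfl

theorem krylov_mul_eq_companion_charpoly_mul [Nontrivial R] {N : ℕ} (hN : Fintype.card n = N)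
    (v : n → R) (A : Matrix n n R) :
    krylov N v A * A = companion N A.charpoly * krylov N v A :=
  krylov_mul_eq_companion_mul A.charpoly_monic (A.charpoly_natDegree_eq_dim.trans hN)
    (by rw [aeval_self_charpoly, vecMul_zero])

end Krylov

section Hessenberg

open Matrix

/-- A unit lower Hessenberg matrix: its entries are `1` on the superdiagonal and `0` above it.
The first standard row vector is cyclic for such a matrix. -/
structure IsUnitLowerHessenberg {R : Type*} [Zero R] [One R] {N : ℕ}
    (A : Matrix (Fin N) (Fin N) R) : Prop where
  apply_eq_one : ∀ ⦃i j : Fin N⦄, (i : ℕ) + 1 = j → A i j = 1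
  apply_eq_zero : ∀ ⦃i j : Fin N⦄, (i : ℕ) + 1 < j → A i j = 0

namespace IsUnitLowerHessenberg

theorem pow_apply_of_add_le {R : Type*} [Semiring R] {N : ℕ} {A : Matrix (Fin N) (Fin N) R}
    (hA : IsUnitLowerHessenberg A) {k : ℕ} {i j : Fin N} (hij : (i : ℕ) + k ≤ j) :
    (A ^ k) i j = if (i : ℕ) + k = j then 1 else 0 := by
  induction k generalizing j with
  | zero => simp [one_apply, Fin.ext_iff]
  | succ k ih =>
    let m : Fin N := ⟨i + k, by omega⟩
    rw [pow_succ, mul_apply, Finset.sum_eq_single m]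
    · rw [ih le_rfl, if_pos rfl, one_mul]
      split_ifs with h
      · exact hA.apply_eq_one h
      · exact hA.apply_eq_zero (lt_of_le_of_ne hij h)
    · intro l _ hl
      rcases lt_or_gt_of_ne (Fin.val_ne_of_ne hl) with hlt | hgt
      · have hlj : (l : ℕ) + 1 < j := by grind
        rw [hA.apply_eq_zero hlj, mul_zero]
      · rw [ih hgt.le, if_neg hgt.ne, zero_mul]
    · simp

variable {R : Type*} [CommRing R] {N : ℕ} {A B : Matrix (Fin N) (Fin N) R}

theorem det_krylov_single_zero [NeZero N] (hA : IsUnitLowerHessenberg A) :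
    (krylov N (Pi.single 0 1) A).det = 1 := by
  have entry {k j : Fin N} (hkj : k ≤ j) :
      krylov N (Pi.single 0 1) A k j = if k = j then 1 else 0 := by
    have hkj' : ((0 : Fin N) : ℕ) + k ≤ j := by simpa using hkj
    simpa [krylov, Fin.ext_iff] using hA.pow_apply_of_add_le hkj'
  rw [det_of_isLowerTriangular _ fun k j hkj => ?_]
  · exact Finset.prod_eq_one fun k _ => by rw [entry le_rfl, if_pos rfl]
  · have hkj : k < j := hkj
    rw [entry hkj.le, if_neg hkj.ne]

theorem isConj_companion_charpoly (hA : IsUnitLowerHessenberg A) :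
    IsConj A (companion N A.charpoly) := by
  obtain _ | _ := subsingleton_or_nontrivial R
  · exact Subsingleton.elim A (companion N A.charpoly) ▸ IsConj.refl A
  obtain rfl | hN := eq_or_ne N 0
  · exact Subsingleton.elim A (companion 0 A.charpoly) ▸ IsConj.refl A
  have : NeZero N := ⟨hN⟩
  have hunit : IsUnit (krylov N (Pi.single 0 1) A) :=
    (isUnit_iff_isUnit_det _).2 (by simp [hA.det_krylov_single_zero])
  exact ⟨hunit.unit, krylov_mul_eq_companion_charpoly_mul (Fintype.card_fin N) _ A⟩

theorem isConj_iff_charpoly_eq (hA : IsUnitLowerHessenberg A) (hB : IsUnitLowerHessenberg B) :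
    IsConj A B ↔ A.charpoly = B.charpoly := by
  constructor
  · rw [isConj_iff_exists_eq_mul_mul_inv]
    rintro ⟨g, rfl⟩
    rw [coe_units_inv, charpoly_units_conj]
  · intro h
    exact hA.isConj_companion_charpoly.trans (h ▸ hB.isConj_companion_charpoly.symm)

theorem isConj_iff_exists_perm_diag [IsDomain R] (hA : IsUnitLowerHessenberg A)
    (hB : IsUnitLowerHessenberg B) (hA_tri : A.IsUpperTriangular) (hB_tri : B.IsUpperTriangular) :
    IsConj A B ↔ ∃ σ : Equiv.Perm (Fin N), ∀ j, B j j = A (σ j) (σ j) := by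
  rw [hA.isConj_iff_charpoly_eq hB, charpoly_of_isUpperTriangular A hA_tri,
    charpoly_of_isUpperTriangular B hB_tri, prod_X_sub_C_eq_iff_exists_perm]

end IsUnitLowerHessenberg

end Hessenberg

section Ereg

open Matrix

variable {𝕂 : Type*} [Field 𝕂] {N : ℕ} (d : Fin N → 𝕂)

theorem ereg_add_diagonal_apply_self (i : Fin N) : (ereg 𝕂 N + diagonal d) i i = d i := by
  simp [ereg]

theorem isUnitLowerHessenberg_ereg_add_diagonal :
    IsUnitLowerHessenberg (ereg 𝕂 N + diagonal d) where
  apply_eq_one i j hij := by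
    have : i ≠ j := by grind
    simp [ereg, hij, this]
  apply_eq_zero i j hij := by
    have : i ≠ j := by grind
    simp [ereg, hij.ne, this]

theorem isUpperTriangular_ereg_add_diagonal : (ereg 𝕂 N + diagonal d).IsUpperTriangular := by
  refine BlockTriangular.add (fun i j hji => if_neg ?_) (blockTriangular_diagonal d)
  have : j < i := hji
  omega

end Ereg

theorem ereg_add_diagonal_conjugate_iff_perm_general {𝕂 : Type*} [Field 𝕂] {N : ℕ}
    (d₁ d₂ : Fin N → 𝕂) :
    (∃ g : (Matrix (Fin N) (Fin N) 𝕂)ˣ,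
        ereg 𝕂 N + Matrix.diagonal d₂ =
          (g : Matrix (Fin N) (Fin N) 𝕂) * (ereg 𝕂 N + Matrix.diagonal d₁) *
            ((g⁻¹ : (Matrix (Fin N) (Fin N) 𝕂)ˣ) : Matrix (Fin N) (Fin N) 𝕂)) ↔
    (∃ σ : Equiv.Perm (Fin N), ∀ j : Fin N, d₂ j = d₁ (σ j)) := by
  rw [← isConj_iff_exists_eq_mul_mul_inv,
    (isUnitLowerHessenberg_ereg_add_diagonal d₁).isConj_iff_exists_perm_diag
      (isUnitLowerHessenberg_ereg_add_diagonal d₂) (isUpperTriangular_ereg_add_diagonal d₁)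
      (isUpperTriangular_ereg_add_diagonal d₂)]
  simp only [ereg_add_diagonal_apply_self]

theorem ereg_add_diagonal_conjugate_iff_perm {𝕂 : Type*} [Field 𝕂] [IsAlgClosed 𝕂]
    [CharZero 𝕂] {N : ℕ} (d₁ d₂ : Fin N → 𝕂) :
    (∃ g : (Matrix (Fin N) (Fin N) 𝕂)ˣ,
        ereg 𝕂 N + Matrix.diagonal d₂ =
          (g : Matrix (Fin N) (Fin N) 𝕂) * (ereg 𝕂 N + Matrix.diagonal d₁) *
            ((g⁻¹ : (Matrix (Fin N) (Fin N) 𝕂)ˣ) : Matrix (Fin N) (Fin N) 𝕂)) ↔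
    (∃ σ : Equiv.Perm (Fin N), ∀ j : Fin N, d₂ j = d₁ (σ j)) :=
  ereg_add_diagonal_conjugate_iff_perm_general d₁ d₂
end

section
/- Block version of the Jordan-form computation: let t ∈ h. Then the semisimple part of e + t is GL(V)-conjugate to t, and the nilpotent part n of e + t has Jordan type given by the integers m_i(t,c): for every k ≥ 0, dim ker(n^k) = Σ_{i=1}^{δ} Σ_{c ∈ 𝕂} min(k, m_i(t,c)) (the inner sum has finitely many nonzero terms). -/
/-! Block version of the Jordan-form computation: for `t ∈ h`, the semisimple part of
`e + t` is conjugate to `t`, and the nilpotent part has Jordan type given by the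
multiplicities `m_i(t,c)`. -/

namespace JordanBlockSetup

variable {𝕂 : Type*} [Field 𝕂] {δ : ℕ}

/-- The index set of the Jordan basis `{v_j^{(i)}}` attached to the partition `λ`. -/
abbrev Idx (lam : Fin δ → ℕ) := Σ i : Fin δ, Fin (lam i)

/-- The nilpotent element `e = Σ_i e_i`, `e·v_j^{(i)} = v_{j−1}^{(i)}`. -/
def eMat (𝕂 : Type*) [Field 𝕂] (lam : Fin δ → ℕ) : Matrix (Idx lam) (Idx lam) 𝕂 :=
  Matrix.of fun r c => if r.1 = c.1 ∧ (r.2 : ℕ) + 1 = (c.2 : ℕ) then 1 else 0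

/-- `m_i(t, c)`: the multiplicity of `c` as an eigenvalue of the `i`-th diagonal block. -/
noncomputable def mult (lam : Fin δ → ℕ) (d : Idx lam → 𝕂) (i : Fin δ) (c : 𝕂) : ℕ :=
  Nat.card {j : Fin (lam i) // d ⟨i, j⟩ = c}

/-- A matrix is semisimple iff it is diagonalizable. -/
def IsSemisimpleM {lam : Fin δ → ℕ} (x : Matrix (Idx lam) (Idx lam) 𝕂) : Prop :=
  ∃ (g : (Matrix (Idx lam) (Idx lam) 𝕂)ˣ) (dd : Idx lam → 𝕂),
    (g : Matrix (Idx lam) (Idx lam) 𝕂) * x *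
      ((g⁻¹ : (Matrix (Idx lam) (Idx lam) 𝕂)ˣ) : Matrix (Idx lam) (Idx lam) 𝕂) =
        Matrix.diagonal dd

end JordanBlockSetup

open JordanBlockSetup

/-!
The nilpotent part `n` commutes with the diagonalisable part `s`, so `e + t` and `s` have the same
maximal generalised eigenspaces. Comparing their dimensions shows that `s` and `t` have the same
eigenvalues with multiplicities, hence are conjugate. Moreover `e + t - c` acts as `n` on
`ker (s - c)`, so `ker ((e + t - c) ^ k) = ker (n ^ k) ∩ ker (s - c)` and
`dim ker (n ^ k) = ∑ c, dim ker ((e + t - c) ^ k)`. Finally `e + t` is block diagonal, and the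
`i`-th block has eigenspaces of dimension at most one, so it contributes `min k (m_i(t, c))` to the
summand at `c`.
-/

namespace JordanBlockSetup

open Matrix Module Module.End Polynomial

section LinearAlgebra

variable {R M M' K V : Type*} [CommRing R] [AddCommGroup M] [Module R M]

theorem maxGenEigenspace_le_maxGenEigenspace_add {f n : End R M} (hfn : Commute f n)
    (hn : IsNilpotent n) (c : R) :
    f.maxGenEigenspace c ≤ (f + n).maxGenEigenspace c := by
  have hn_top : n.maxGenEigenspace 0 = ⊤ := by
    obtain ⟨k, hk⟩ := hn
    refine eq_top_iff.mpr fun x _ ↦ (mem_maxGenEigenspace n 0 x).mpr ⟨k, ?_⟩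
    rw [zero_smul, sub_zero, hk, LinearMap.zero_apply]
  simpa only [hn_top, inf_top_eq, add_zero, top_add] using
    genEigenspace_inf_le_add f n c 0 ⊤ ⊤ hfn

theorem maxGenEigenspace_add_of_isNilpotent {f n : End R M} (hfn : Commute f n)
    (hn : IsNilpotent n) (c : R) :
    (f + n).maxGenEigenspace c = f.maxGenEigenspace c := by
  refine le_antisymm ?_ (maxGenEigenspace_le_maxGenEigenspace_add hfn hn c)
  have hcomm : Commute (f + n) (-n) := (hfn.add_left (Commute.refl n)).neg_right
  simpa only [add_neg_cancel_right] using
    maxGenEigenspace_le_maxGenEigenspace_add hcomm hn.neg c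

theorem add_sub_smul_one_pow_apply_of_mem_eigenspace {f n : End R M} (hfn : Commute f n) {c : R}
    (k : ℕ) {x : M} (hx : x ∈ f.eigenspace c) :
    ((f + n - c • 1) ^ k) x = (n ^ k) x := by
  induction k generalizing x with
  | zero => rfl
  | succ k ih =>
    have hstep : (f + n - c • 1) x = n x := by
      simp [mem_eigenspace_iff.mp hx]
    have hnx : n x ∈ f.eigenspace c := mapsTo_genEigenspace_of_comm hfn c 1 hx
    rw [pow_succ, pow_succ, End.mul_apply, End.mul_apply, hstep, ih hnx]

theorem iSup_eigenspace_eq_top_of_surjective [AddCommGroup M'] [Module R M']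
    {f : End R M} {f' : End R M'} {φ : M →ₗ[R] M'} (hφ : Function.Surjective φ)
    (hcomm : f' ∘ₗ φ = φ ∘ₗ f) (hf : ⨆ c, f.eigenspace c = ⊤) :
    ⨆ c, f'.eigenspace c = ⊤ := by
  rw [eq_top_iff, ← LinearMap.range_eq_top.mpr hφ, ← Submodule.map_top, ← hf, Submodule.map_iSup]
  refine iSup_mono fun c ↦ Submodule.map_le_iff_le_comap.mpr fun x hx ↦ ?_
  rw [Submodule.mem_comap, mem_eigenspace_iff, ← LinearMap.comp_apply, hcomm, LinearMap.comp_apply,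
    mem_eigenspace_iff.mp hx, map_smul]

variable [IsDomain R] [IsTorsionFree R M]

theorem maxGenEigenspace_eq_eigenspace_of_iSup_eigenspace_eq_top {f : End R M}
    (hf : ⨆ c, f.eigenspace c = ⊤) (c : R) : f.maxGenEigenspace c = f.eigenspace c :=
  (congrFun ((f.independent_maxGenEigenspace.le_iff_eq_of_iSup_eq_top hf).mp
    fun _ ↦ eigenspace_le_maxGenEigenspace) c).symm

theorem genEigenspace_add_eq_inf_eigenspace {s n : End R M} (hsn : Commute s n)
    (hn : IsNilpotent n) (hs : ⨆ c, s.eigenspace c = ⊤) (c : R) (k : ℕ) :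
    (s + n).genEigenspace c k = LinearMap.ker (n ^ k) ⊓ s.eigenspace c := by
  have hle : (s + n).genEigenspace c k ≤ s.eigenspace c := by
    rw [← maxGenEigenspace_eq_eigenspace_of_iSup_eigenspace_eq_top hs,
      ← maxGenEigenspace_add_of_isNilpotent hsn hn]
    exact genEigenspace_le_maximal _ _ _
  rw [← inf_eq_left.mpr hle]
  ext x
  simp only [Submodule.mem_inf, mem_genEigenspace_nat, LinearMap.mem_ker]
  exact and_congr_left fun hx ↦ by rw [add_sub_smul_one_pow_apply_of_mem_eigenspace hsn k hx]

variable [Field K] [AddCommGroup V] [Module K V] [FiniteDimensional K V]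

theorem finrank_sup_of_supIndep {ι : Type*} {p : ι → Submodule K V}
    {s : Finset ι} (hs : s.SupIndep p) : finrank K (s.sup p : Submodule K V) =
      ∑ i ∈ s, finrank K (p i) := by
  classical
  induction s using Finset.induction_on with
  | empty => simp
  | insert i s hi ih =>
    have hdisj : p i ⊓ s.sup p = ⊥ :=
      (hs (Finset.subset_insert i s) (Finset.mem_insert_self i s) hi).eq_bot
    have hsum := Submodule.finrank_sup_add_finrank_inf_eq (p i) (s.sup p)
    rw [hdisj, finrank_bot, add_zero] at hsum
    rw [Finset.sup_insert, Finset.sum_insert hi, hsum, ih (hs.subset (Finset.subset_insert i s))]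

theorem finrank_iSup_of_iSupIndep {ι : Type*} {p : ι → Submodule K V} (hp : iSupIndep p) :
    finrank K (⨆ i, p i : Submodule K V) = ∑ᶠ i, finrank K (p i) := by
  have hfin : {i | p i ≠ ⊥}.Finite := WellFoundedGT.finite_ne_bot_of_iSupIndep hp
  have hsup : ⨆ i, p i = hfin.toFinset.sup p := by
    refine le_antisymm (iSup_le fun i ↦ ?_) (Finset.sup_le fun i _ ↦ le_iSup p i)
    by_cases hi : p i = ⊥
    · simp only [hi, bot_le]
    · exact Finset.le_sup (hfin.mem_toFinset.mpr hi)
  rw [hsup, finrank_sup_of_supIndep (hp.supIndep' _), finsum_eq_sum_of_support_subset]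
  intro i hi
  rw [hfin.coe_toFinset]
  exact fun hbot ↦ hi (Submodule.finrank_eq_zero.mpr hbot)

theorem finrank_ker_pow_eq_finsum_finrank_genEigenspace {s n : End K V} (hsn : Commute s n)
    (hn : IsNilpotent n) (hs : ⨆ c, s.eigenspace c = ⊤) (k : ℕ) :
    finrank K (LinearMap.ker (n ^ k)) = ∑ᶠ c, finrank K ((s + n).genEigenspace c k) := by
  have hstable : ∀ x ∈ LinearMap.ker (n ^ k), s x ∈ LinearMap.ker (n ^ k) := fun x hx ↦ by
    rw [LinearMap.mem_ker] at hx ⊢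
    rw [← End.mul_apply, ← (hsn.pow_right k).eq, End.mul_apply, hx, map_zero]
  have hdecomp : LinearMap.ker (n ^ k) = ⨆ c, (s + n).genEigenspace c k := by
    simp_rw [genEigenspace_add_eq_inf_eigenspace hsn hn hs]
    exact Submodule.eq_iSup_inf_genEigenspace 1 hstable hs
  rw [hdecomp, finrank_iSup_of_iSupIndep ((s + n).independent_genEigenspace k)]

theorem rootMultiplicity_charpoly_add_of_isNilpotent {f n : End K V} (hfn : Commute f n)
    (hn : IsNilpotent n) (c : K) :
    (f + n).charpoly.rootMultiplicity c = f.charpoly.rootMultiplicity c := by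
  rw [← LinearMap.finrank_maxGenEigenspace_eq, ← LinearMap.finrank_maxGenEigenspace_eq,
    maxGenEigenspace_add_of_isNilpotent hfn hn]

theorem finrank_ker_mul_le (f g : End K V) :
    finrank K (LinearMap.ker (f * g)) ≤
      finrank K (LinearMap.ker f) + finrank K (LinearMap.ker g) := by
  let r := g.domRestrict (LinearMap.ker (f * g))
  have hrange : LinearMap.range r ≤ LinearMap.ker f := by
    rintro _ ⟨x, rfl⟩
    exact x.2
  have hker : (LinearMap.ker r).map (LinearMap.ker (f * g)).subtype ≤ LinearMap.ker g := by
    rintro _ ⟨x, hx, rfl⟩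
    exact hx
  calc finrank K (LinearMap.ker (f * g))
      = finrank K (LinearMap.range r) + finrank K (LinearMap.ker r) :=
        (LinearMap.finrank_range_add_finrank_ker r).symm
    _ = finrank K (LinearMap.range r) +
          finrank K ((LinearMap.ker r).map (LinearMap.ker (f * g)).subtype) := by
        rw [Submodule.finrank_map_subtype_eq]
    _ ≤ finrank K (LinearMap.ker f) + finrank K (LinearMap.ker g) :=
        add_le_add (Submodule.finrank_mono hrange) (Submodule.finrank_mono hker)

theorem finrank_ker_pow_eq_min_of_finrank_ker_le_one {f : End K V}
    (hf : finrank K (LinearMap.ker f) ≤ 1) (k : ℕ) :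
    finrank K (LinearMap.ker (f ^ k)) = min k (finrank K (f.maxGenEigenspace 0)) := by
  have hmax : f.maxGenEigenspace 0 = LinearMap.ker (f ^ finrank K V) := by
    rw [maxGenEigenspace_eq_genEigenspace_finrank, genEigenspace_nat, zero_smul, sub_zero]
  -- The kernels grow by at most one dimension at each step, and once constant they stay so.
  induction k with
  | zero => simp [End.one_eq_id]
  | succ k ih =>
    have hmono : LinearMap.ker (f ^ k) ≤ LinearMap.ker (f ^ (k + 1)) := by
      rw [pow_succ', End.mul_eq_comp]
      exact LinearMap.ker_le_ker_comp _ _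
    have hstep : finrank K (LinearMap.ker (f ^ (k + 1))) ≤ finrank K (LinearMap.ker (f ^ k)) + 1 :=
      (pow_succ f k ▸ finrank_ker_mul_le (f ^ k) f).trans (Nat.add_le_add_left hf _)
    have hbound : finrank K (LinearMap.ker (f ^ (k + 1))) ≤ finrank K (f.maxGenEigenspace 0) :=
      hmax ▸ Submodule.finrank_mono (ker_pow_le_ker_pow_finrank f (k + 1))
    rcases hmono.eq_or_lt with hstable | hlt
    · have hconst : LinearMap.ker (f ^ k) = f.maxGenEigenspace 0 := by
        rw [hmax, ← ker_pow_eq_ker_pow_finrank_of_le (Nat.le_add_left _ k)]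
        exact ker_pow_constant hstable _
      rw [← hstable, hconst] at hbound ⊢
      rw [hconst] at ih
      omega
    · have := Submodule.finrank_lt_finrank_of_lt hlt
      omega

theorem finrank_genEigenspace_eq_min_rootMultiplicity {f : End K V} {c : K}
    (hf : finrank K (f.eigenspace c) ≤ 1) (k : ℕ) :
    finrank K (f.genEigenspace c k) = min k (f.charpoly.rootMultiplicity c) := by
  rw [eigenspace_def] at hf
  rw [genEigenspace_nat, finrank_ker_pow_eq_min_of_finrank_ker_le_one hf,
    ← maxGenEigenspace_eq_maxGenEigenspace_zero, LinearMap.finrank_maxGenEigenspace_eq]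

end LinearAlgebra

section Matrices

variable {R K ι : Type*} [CommRing R] [Field K] [Fintype ι]

theorem genEigenspace_toLin'_eq_ker [DecidableEq ι] (A : Matrix ι ι R) (c : R) (k : ℕ) :
    genEigenspace (toLin' A) c k = LinearMap.ker (toLin' ((A - c • 1) ^ k)) := by
  rw [genEigenspace_nat, toLin'_pow, map_sub, map_smul, toLin'_one]
  rfl

section BlockDiagonal

variable [DecidableEq ι] {m : ι → Type*} [∀ i, Fintype (m i)]

theorem blockDiagonal'_mulVec_apply (M : ∀ i, Matrix (m i) (m i) R) (x : (Σ i, m i) → R) (i : ι)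
    (j : m i) :
    (blockDiagonal' M *ᵥ x) ⟨i, j⟩ = (M i *ᵥ fun j ↦ x ⟨i, j⟩) j := by
  simp only [mulVec, dotProduct, Fintype.sum_sigma]
  rw [Fintype.sum_eq_single i fun i' hi' ↦ by simp [blockDiagonal'_apply_ne M _ _ hi'.symm]]
  simp

variable [∀ i, DecidableEq (m i)]

theorem mem_ker_toLin'_blockDiagonal' (M : ∀ i, Matrix (m i) (m i) R) {x : (Σ i, m i) → R} :
    x ∈ LinearMap.ker (toLin' (blockDiagonal' M)) ↔
      ∀ i, (fun j ↦ x ⟨i, j⟩) ∈ LinearMap.ker (toLin' (M i)) := by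
  simp only [LinearMap.mem_ker, toLin'_apply, funext_iff, Sigma.forall,
    blockDiagonal'_mulVec_apply, Pi.zero_apply]

theorem finrank_ker_toLin'_blockDiagonal' (M : ∀ i, Matrix (m i) (m i) K) :
    finrank K (LinearMap.ker (toLin' (blockDiagonal' M))) =
      ∑ i, finrank K (LinearMap.ker (toLin' (M i))) := by
  rw [← finrank_pi_fintype]
  exact LinearEquiv.finrank_eq
    { toFun x i := ⟨fun j ↦ x.1 ⟨i, j⟩, (mem_ker_toLin'_blockDiagonal' M).mp x.2 i⟩
      invFun y := ⟨fun p ↦ (y p.1).1 p.2, (mem_ker_toLin'_blockDiagonal' M).mpr fun i ↦ (y i).2⟩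
      map_add' _ _ := rfl
      map_smul' _ _ := rfl }

theorem finrank_genEigenspace_toLin'_blockDiagonal' (M : ∀ i, Matrix (m i) (m i) K) (c : K)
    (k : ℕ) :
    finrank K (genEigenspace (toLin' (blockDiagonal' M)) c k) =
      ∑ i, finrank K (genEigenspace (toLin' (M i)) c k) := by
  have hpow : (blockDiagonal' M - c • 1) ^ k = blockDiagonal' fun i ↦ (M i - c • 1) ^ k := by
    rw [← blockDiagonal'_one, ← blockDiagonal'_smul, ← blockDiagonal'_sub, ← blockDiagonal'_pow]
    rfl
  rw [genEigenspace_toLin'_eq_ker, hpow, finrank_ker_toLin'_blockDiagonal']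
  exact Finset.sum_congr rfl fun i _ ↦ by rw [genEigenspace_toLin'_eq_ker]

end BlockDiagonal

theorem rootMultiplicity_prod_X_sub_C [IsDomain R] (f : ι → R) (c : R) :
    (∏ i, (X - C (f i))).rootMultiplicity c = Nat.card {i // f i = c} := by
  classical
  have hroots : (∏ i, (X - C (f i))).roots = Finset.univ.val.map f := by
    rw [← roots_multiset_prod_X_sub_C (Finset.univ.val.map f), Multiset.map_map]
    rfl
  rw [← count_roots, hroots, Multiset.count_map, Nat.card_eq_fintype_card, Fintype.card_subtype]
  simp only [eq_comm (a := c)]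
  rfl

variable [DecidableEq ι]

theorem exists_units_diagonal_comp_eq (d : ι → R) (σ : Equiv.Perm ι) :
    ∃ p : (Matrix ι ι R)ˣ, diagonal (d ∘ σ) =
      (p : Matrix ι ι R) * diagonal d * ((p⁻¹ : (Matrix ι ι R)ˣ) : Matrix ι ι R) := by
  refine ⟨⟨σ.permMatrix R, σ⁻¹.permMatrix R, ?_, ?_⟩, ?_⟩
  · rw [← permMatrix_mul]; simp
  · rw [← permMatrix_mul]; simp
  · change _ = σ.permMatrix R * diagonal d * (σ⁻¹).permMatrix R
    rw [PEquiv.toMatrix_toPEquiv_mul, PEquiv.mul_toMatrix_toPEquiv, submatrix_submatrix]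
    exact (submatrix_diagonal_equiv d σ).symm

theorem exists_units_diagonal_eq_of_rootMultiplicity_charpoly_eq [IsDomain R]
    {d d' : ι → R} (h : ∀ c, (diagonal d').charpoly.rootMultiplicity c =
      (diagonal d).charpoly.rootMultiplicity c) :
    ∃ p : (Matrix ι ι R)ˣ, diagonal d' =
      (p : Matrix ι ι R) * diagonal d * ((p⁻¹ : (Matrix ι ι R)ˣ) : Matrix ι ι R) := by
  simp only [charpoly_diagonal, rootMultiplicity_prod_X_sub_C] at h
  let σ : Equiv.Perm ι := Equiv.ofFiberEquiv fun c ↦ (Finite.card_eq.mp (h c)).some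
  have hσ : d ∘ σ = d' := funext fun i ↦ Equiv.ofFiberEquiv_map _ i
  exact hσ ▸ exists_units_diagonal_comp_eq d σ

end Matrices

section DiagonalizableMatrices

variable {K : Type*} [Field K] {δ : ℕ} {lam : Fin δ → ℕ} {s : Matrix (Idx lam) (Idx lam) K}

theorem IsSemisimpleM.iSup_eigenspace_toLin'_eq_top (hs : IsSemisimpleM s) :
    ⨆ c, eigenspace (toLin' s) c = ⊤ := by
  obtain ⟨g, d, hg⟩ := hs
  let φ := toLin' ((g⁻¹ : (Matrix (Idx lam) (Idx lam) K)ˣ) : Matrix (Idx lam) (Idx lam) K)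
  have hφ : Function.Surjective φ := mulVec_surjective_iff_isUnit.mpr g⁻¹.isUnit
  have hcomm : toLin' s ∘ₗ φ = φ ∘ₗ toLin' (diagonal d) := by
    rw [← toLin'_mul, ← toLin'_mul, ← hg, mul_assoc, Units.inv_mul_cancel_left]
  exact iSup_eigenspace_eq_top_of_surjective hφ hcomm (iSup_eigenspace_toLin'_diagonal_eq_top d)

theorem IsSemisimpleM.exists_eq_conj_diagonal_of_rootMultiplicity_charpoly_eq
    (hs : IsSemisimpleM s) {d : Idx lam → K}
    (h : ∀ c, s.charpoly.rootMultiplicity c = (diagonal d).charpoly.rootMultiplicity c) :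
    ∃ g : (Matrix (Idx lam) (Idx lam) K)ˣ,
      s = (g : Matrix (Idx lam) (Idx lam) K) * diagonal d *
        ((g⁻¹ : (Matrix (Idx lam) (Idx lam) K)ˣ) : Matrix (Idx lam) (Idx lam) K) := by
  obtain ⟨g, d', hg⟩ := hs
  have hcharpoly : s.charpoly = (diagonal d').charpoly := by
    rw [← hg, coe_units_inv, charpoly_units_conj]
  obtain ⟨p, hp⟩ := exists_units_diagonal_eq_of_rootMultiplicity_charpoly_eq
    fun c ↦ hcharpoly ▸ h c
  refine ⟨g⁻¹ * p, ?_⟩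
  have hs : s = (g⁻¹ : (Matrix (Idx lam) (Idx lam) K)ˣ) * diagonal d' * g := by
    rw [← hg, mul_assoc, Units.inv_mul_cancel_right, Units.inv_mul_cancel_left]
  rw [hs, hp, _root_.mul_inv_rev, inv_inv, Units.val_mul, Units.val_mul]
  simp only [mul_assoc]

end DiagonalizableMatrices

section Blocks

theorem finite_support_min_mult {K : Type*} {δ : ℕ} (lam : Fin δ → ℕ) (d : Idx lam → K)
    (i : Fin δ) (k : ℕ) :
    (Function.support fun c ↦ min k (mult lam d i c)).Finite := by
  refine (Set.finite_range fun j ↦ d ⟨i, j⟩).subset fun c hc ↦ ?_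
  have hmult : mult lam d i c ≠ 0 := fun h ↦ hc (by simp only [h, Nat.min_zero])
  obtain ⟨⟨j, hj⟩⟩ := (Nat.card_ne_zero.mp hmult).1
  exact ⟨j, hj⟩

variable {R K : Type*} [CommRing R] [Field K]

/-- One block of `e + t`: the upper shift plus the diagonal matrix with entries `f`. It is a Jordan
block when `f` is constant. -/
def shiftAddDiagonal {m : ℕ} (f : Fin m → R) : Matrix (Fin m) (Fin m) R :=
  (Matrix.of fun r c : Fin m ↦ if (r : ℕ) + 1 = (c : ℕ) then 1 else 0) + diagonal f

theorem shiftAddDiagonal_mulVec_castSucc {m : ℕ} (f x : Fin (m + 1) → R) (j : Fin m) :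
    (shiftAddDiagonal f *ᵥ x) j.castSucc = x j.succ + f j.castSucc * x j.castSucc := by
  have hshift (i : Fin (m + 1)) : (j : ℕ) + 1 = i ↔ i = j.succ := by
    rw [Fin.ext_iff, Fin.val_succ, eq_comm]
  rw [shiftAddDiagonal, add_mulVec, Pi.add_apply, mulVec_diagonal]
  simp [mulVec, dotProduct, hshift]

theorem charpoly_shiftAddDiagonal {m : ℕ} (f : Fin m → R) :
    (shiftAddDiagonal f).charpoly = ∏ i, (X - C (f i)) := by
  rw [charpoly_of_isUpperTriangular]
  · simp [shiftAddDiagonal]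
  · intro i j (hji : j < i)
    have : (i : ℕ) + 1 ≠ j := by omega
    simp [shiftAddDiagonal, this, hji.ne']

theorem eq_zero_of_mem_eigenspace_shiftAddDiagonal {m : ℕ} {f x : Fin (m + 1) → R} {c : R}
    (hx : x ∈ eigenspace (toLin' (shiftAddDiagonal f)) c) (hx0 : x 0 = 0) : x = 0 := by
  rw [mem_eigenspace_iff, toLin'_apply] at hx
  funext j
  induction j using Fin.induction with
  | zero => exact hx0
  | succ j ih =>
    have hj := congrFun hx j.castSucc
    rw [shiftAddDiagonal_mulVec_castSucc, Pi.smul_apply, ih] at hj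
    simpa using hj

theorem finrank_eigenspace_shiftAddDiagonal_le_one {m : ℕ} (f : Fin m → K) (c : K) :
    finrank K (eigenspace (toLin' (shiftAddDiagonal f)) c) ≤ 1 := by
  cases m with
  | zero => exact (Submodule.finrank_le _).trans (by simp)
  | succ m =>
    let evalZero := (LinearMap.proj (R := K) (φ := fun _ : Fin (m + 1) ↦ K) 0).domRestrict
      (eigenspace (toLin' (shiftAddDiagonal f)) c)
    have hinj : Function.Injective evalZero :=
      (injective_iff_map_eq_zero evalZero).mpr fun x hx ↦
        Subtype.ext (eq_zero_of_mem_eigenspace_shiftAddDiagonal x.2 hx)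
    simpa using LinearMap.finrank_le_finrank_of_injective hinj

theorem finrank_genEigenspace_shiftAddDiagonal {m : ℕ} (f : Fin m → K) (c : K) (k : ℕ) :
    finrank K (genEigenspace (toLin' (shiftAddDiagonal f)) c k) =
      min k (Nat.card {j // f j = c}) := by
  rw [finrank_genEigenspace_eq_min_rootMultiplicity
    (finrank_eigenspace_shiftAddDiagonal_le_one f c), charpoly_toLin', charpoly_shiftAddDiagonal,
    rootMultiplicity_prod_X_sub_C]

variable {δ : ℕ} (lam : Fin δ → ℕ) (d : Idx lam → K)

theorem eMat_add_diagonal_eq_blockDiagonal' : eMat K lam + diagonal d =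
    blockDiagonal' fun i ↦ shiftAddDiagonal fun j ↦ d ⟨i, j⟩ := by
  ext ⟨i, j⟩ ⟨i', j'⟩
  rcases eq_or_ne i i' with rfl | hi
  · simp [eMat, shiftAddDiagonal, diagonal_apply]
  · simp [eMat, hi, blockDiagonal'_apply_ne]

theorem charpoly_eMat_add_diagonal :
    (eMat K lam + diagonal d).charpoly = ∏ j, (X - C (d j)) := by
  let : LinearOrder (Idx lam) := inferInstanceAs (LinearOrder (Σₗ i, Fin (lam i)))
  rw [charpoly_of_isUpperTriangular]
  · simp [eMat]
  · intro p q hqp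
    rcases (hqp : Sigma.Lex (· < ·) (fun _ ↦ (· < ·)) q p) with ⟨_, _, hi⟩ | ⟨j, j', hj⟩
    · simp [eMat, hi.ne']
    · have : (j' : ℕ) + 1 ≠ j := (Nat.lt_succ_of_lt hj).ne'
      simp [eMat, this, hj.ne']

theorem finrank_genEigenspace_eMat_add_diagonal (c : K) (k : ℕ) :
    finrank K (genEigenspace (toLin' (eMat K lam + diagonal d)) c k) =
      ∑ i, min k (mult lam d i c) := by
  rw [eMat_add_diagonal_eq_blockDiagonal', finrank_genEigenspace_toLin'_blockDiagonal']
  simp only [finrank_genEigenspace_shiftAddDiagonal, mult]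

end Blocks

end JordanBlockSetup

theorem jordan_form_of_e_add_diagonal_blocks_general {𝕂 : Type*} [Field 𝕂] {δ : ℕ}
    (lam : Fin δ → ℕ) (d : Idx lam → 𝕂) (s n : Matrix (Idx lam) (Idx lam) 𝕂)
    (hsd : IsSemisimpleM s) (hn : IsNilpotent n) (hcomm : s * n = n * s)
    (hx : eMat 𝕂 lam + Matrix.diagonal d = s + n) :
    (∃ g : (Matrix (Idx lam) (Idx lam) 𝕂)ˣ,
        s = (g : Matrix (Idx lam) (Idx lam) 𝕂) * Matrix.diagonal d *
          ((g⁻¹ : (Matrix (Idx lam) (Idx lam) 𝕂)ˣ) : Matrix (Idx lam) (Idx lam) 𝕂)) ∧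
    (∀ k : ℕ,
      Module.finrank 𝕂 (LinearMap.ker (Matrix.mulVecLin (n ^ k))) =
        ∑ i : Fin δ, ∑ᶠ c : 𝕂, min k (mult lam d i c)) := by
  have hcomm' : Commute (Matrix.toLin' s) (Matrix.toLin' n) :=
    Commute.map hcomm Matrix.toLinAlgEquiv'
  have hn' : IsNilpotent (Matrix.toLin' n) := hn.map Matrix.toLinAlgEquiv'
  have hadd : Matrix.toLin' s + Matrix.toLin' n =
      Matrix.toLin' (eMat 𝕂 lam + Matrix.diagonal d) := by
    rw [hx, map_add]
  constructor
  · refine hsd.exists_eq_conj_diagonal_of_rootMultiplicity_charpoly_eq fun c ↦ ?_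
    rw [← Matrix.charpoly_toLin', ← rootMultiplicity_charpoly_add_of_isNilpotent hcomm' hn',
      hadd, Matrix.charpoly_toLin', charpoly_eMat_add_diagonal, Matrix.charpoly_diagonal]
  · intro k
    rw [← Matrix.toLin'_apply', Matrix.toLin'_pow,
      finrank_ker_pow_eq_finsum_finrank_genEigenspace hcomm' hn'
        hsd.iSup_eigenspace_toLin'_eq_top, hadd]
    simp only [finrank_genEigenspace_eMat_add_diagonal]
    exact finsum_sum_comm _ _ fun i _ ↦ finite_support_min_mult lam d i k

theorem jordan_form_of_e_add_diagonal_blocks {𝕂 : Type*} [Field 𝕂] [IsAlgClosed 𝕂]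
    [CharZero 𝕂] {δ : ℕ} (lam : Fin δ → ℕ) (hanti : Antitone lam) (hpos : ∀ i, 0 < lam i)
    (d : Idx lam → 𝕂) (s n : Matrix (Idx lam) (Idx lam) 𝕂)
    (hsd : IsSemisimpleM s) (hn : IsNilpotent n) (hcomm : s * n = n * s)
    (hx : eMat 𝕂 lam + Matrix.diagonal d = s + n) :
    (∃ g : (Matrix (Idx lam) (Idx lam) 𝕂)ˣ,
        s = (g : Matrix (Idx lam) (Idx lam) 𝕂) * Matrix.diagonal d *
          ((g⁻¹ : (Matrix (Idx lam) (Idx lam) 𝕂)ˣ) : Matrix (Idx lam) (Idx lam) 𝕂)) ∧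
    (∀ k : ℕ,
      Module.finrank 𝕂 (LinearMap.ker (Matrix.mulVecLin (n ^ k))) =
        ∑ i : Fin δ, ∑ᶠ c : 𝕂, min k (mult lam d i c)) :=
  jordan_form_of_e_add_diagonal_blocks_general lam d s n hsd hn hcomm hx
end

section
/- In type AIII, let s ∈ p be semisimple and g ∈ GL(V) be such that g s g⁻¹ ∈ p. Then g z g⁻¹ ∈ p for every z ∈ c_p(p^s)^•, where p^s := p ∩ g^s, c_p(p^s) := {z ∈ p : zw = wz for all w ∈ p^s}, and c_p(p^s)^• := {z ∈ c_p(p^s) : dim g^z ≤ dim g^{z′} for all z′ ∈ c_p(p^s)} is the set of elements of c_p(p^s) whose centralizer has minimal dimension. -/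
/-! In type AIII, if `g ∈ GL(V)` sends a semisimple `s ∈ p` into `p`, then `g` sends all of
`c_p(p^s)^•` into `p`. -/

namespace SymmetricPairAIII

variable {𝕂 : Type*} [Field 𝕂] {N : ℕ}

/-- `gl(V)` for `V = 𝕂^N`. -/
abbrev EndV (𝕂 : Type*) [Field 𝕂] (N : ℕ) := Module.End 𝕂 (Fin N → 𝕂)

/-- Semisimple = diagonalizable: the eigenspaces span `V`. -/
def IsSemisimpleE (x : EndV 𝕂 N) : Prop :=
  (⨆ c : 𝕂, LinearMap.ker (x - c • (1 : EndV 𝕂 N))) = ⊤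

/-- `p = Hom(V_a, V_b) ⊕ Hom(V_b, V_a)`, the `(-1)`-eigenspace of the type AIII involution. -/
def pAIII (Va Vb : Submodule 𝕂 (Fin N → 𝕂)) : Set (EndV 𝕂 N) :=
  {x | Submodule.map x Va ≤ Vb ∧ Submodule.map x Vb ≤ Va}

/-- The conjugation action `g.z = g z g⁻¹` of `GL(V)` on `gl(V)`. -/
def conjAct (g : (EndV 𝕂 N)ˣ) (z : EndV 𝕂 N) : EndV 𝕂 N :=
  (g : EndV 𝕂 N) * z * ((g⁻¹ : (EndV 𝕂 N)ˣ) : EndV 𝕂 N)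

/-- The centralizer `g^z` of `z`, as a subspace of `gl(V)` (used for its dimension). -/
def centSubE (z : EndV 𝕂 N) : Submodule 𝕂 (EndV 𝕂 N) :=
  LinearMap.ker (LinearMap.mulLeft 𝕂 z - LinearMap.mulRight 𝕂 z)

/-- `c_p(p^s)`: the elements of `p` centralizing `p^s = p ∩ g^s`. -/
def cpps (Va Vb : Submodule 𝕂 (Fin N → 𝕂)) (s : EndV 𝕂 N) : Set (EndV 𝕂 N) :=
  {z | z ∈ pAIII Va Vb ∧ ∀ w ∈ pAIII Va Vb, w * s = s * w → z * w = w * z}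

end SymmetricPairAIII

open SymmetricPairAIII

/-! Let `ε` be the involution that is `1` on `V_a` and `-1` on `V_b`, so that `p` is the set of
endomorphisms anticommuting with `ε`. The key point is that every `z ∈ c_p(p^s)` commutes with the
whole centralizer of `s`: off the kernel of `s` because `s u ∈ p^s` for each `u` commuting with `s`
and `ε`, and on the kernel because `z` vanishes there. If `s` and `g s g⁻¹` both lie in `p`, then
`g⁻¹ ε g ε` commutes with `s`, hence with `z`; as `z` anticommutes with `ε`, it anticommutes with
`g⁻¹ ε g` too, which says that `g z g⁻¹ ∈ p`. -/

namespace SymmetricPairAIII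

section Monoid

variable {M : Type*} [Monoid M] {a e x x' y y' : M}

theorem semiconjBy_mul_of_mul_mul_eq_self (h : SemiconjBy a x y) (hx : Commute x x')
    (hxx : x * x' * x = x) (hy : Commute y y') (hyy : y * y' * y = y) :
    SemiconjBy a (x * x') (y * y') :=
  calc a * (x * x') = y * y' * y * a * x' := by rw [hyy, ← h.eq, mul_assoc]
    _ = y * y' * a * (x * x') := by rw [mul_assoc _ y a, ← h.eq]; simp only [mul_assoc]
    _ = y' * y * a * (x' * x) := by rw [hy.eq, hx.eq]
    _ = y' * a * (x * x' * x) := by rw [mul_assoc _ y a, ← h.eq]; simp only [mul_assoc]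
    _ = y' * (a * x) := by rw [hxx, mul_assoc]
    _ = y * y' * a := by rw [h.eq, ← mul_assoc, hy.eq]

theorem semiconjBy_mul_mul_of_mul_self_eq_one (he : e * e = 1) (x : M) :
    SemiconjBy e x (e * x * e) := by
  rw [SemiconjBy, mul_assoc, he, mul_one]

theorem mul_mul_semiconjBy_of_mul_self_eq_one (he : e * e = 1) (x : M) :
    SemiconjBy e (e * x * e) x := by
  rw [SemiconjBy, ← mul_assoc, ← mul_assoc, he, one_mul]

theorem mem_centralizer_singleton : x ∈ Set.centralizer {y} ↔ Commute x y := by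
  simp only [Set.mem_centralizer_iff, Set.mem_singleton_iff, forall_eq]
  exact eq_comm

end Monoid

section Ring

variable {R : Type*} [Ring R] {a e f r s t u w x z : R}

/-- The elements anticommuting with `e`. When `e` is the involution `ε` of a symmetric pair of
type AIII, this is the space `p`. -/
def anticommutant (e : R) : Set R := {x | SemiconjBy e x (-x)}

/-- `c_p(p^s)` for an arbitrary subset `p` of a ring, where `p^s` is the centralizer of `s`
in `p`. -/
def relBicentralizer (p : Set R) (s : R) : Set R := p ∩ (p ∩ Set.centralizer {s}).centralizer

theorem mem_anticommutant : x ∈ anticommutant e ↔ SemiconjBy e x (-x) := Iff.rfl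

theorem mul_eq_neg_mul_of_mem_anticommutant (hx : x ∈ anticommutant e) : x * e = -(e * x) := by
  rw [hx.eq, neg_mul, neg_neg]

theorem mul_right_mem_anticommutant (hx : x ∈ anticommutant e) (hu : Commute e u) :
    x * u ∈ anticommutant e := by
  simpa only [mem_anticommutant, neg_mul] using SemiconjBy.mul_right hx hu

theorem mul_left_mem_anticommutant (hx : x ∈ anticommutant e) (hu : Commute e u) :
    u * x ∈ anticommutant e := by
  simpa only [mem_anticommutant, mul_neg] using SemiconjBy.mul_right hu hx

theorem commute_mul_of_mem_anticommutant (he : x ∈ anticommutant e) (hf : x ∈ anticommutant f) :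
    Commute (f * e) x := by
  simpa only [Commute, neg_neg] using hf.neg_right.mul_left he

theorem commute_mul_mul_of_mem_anticommutant (hs : s ∈ anticommutant e) (hu : Commute u s) :
    Commute (e * u * e) s := by
  simpa only [Commute, neg_neg] using (hs.neg_right.mul_left hu.neg_right).mul_left hs

theorem commute_add_mul_mul (he : e * e = 1) (u : R) : Commute e (u + e * u * e) := by
  simpa only [Commute, add_comm] using (semiconjBy_mul_mul_of_mul_self_eq_one he u).add_right
    (mul_mul_semiconjBy_of_mul_self_eq_one he u)

theorem sub_mul_mul_mem_anticommutant (he : e * e = 1) (u : R) :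
    u - e * u * e ∈ anticommutant e := by
  simpa only [mem_anticommutant, neg_sub] using
    (semiconjBy_mul_mul_of_mul_self_eq_one he u).sub_right
      (mul_mul_semiconjBy_of_mul_self_eq_one he u)

theorem conj_mem_anticommutant_iff (g : Rˣ) :
    ↑g * x * ↑g⁻¹ ∈ anticommutant e ↔ x ∈ anticommutant (↑g⁻¹ * e * ↑g) := by
  have hg := g.mk_semiconjBy x
  refine ⟨fun h ↦ (hg.units_inv_symm_left.neg_right.mul_left h).mul_left hg, fun h ↦ ?_⟩
  simpa only [mem_anticommutant, ← mul_assoc, Units.mul_inv, one_mul, Units.mul_inv_cancel_right]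
    using (hg.neg_right.mul_left h).mul_left hg.units_inv_symm_left

theorem conj_mem_anticommutant (he : e * e = 1) (hs : s ∈ anticommutant e) (g : Rˣ)
    (hgs : ↑g * s * ↑g⁻¹ ∈ anticommutant e) (hz : z ∈ anticommutant e)
    (hzs : z ∈ (Set.centralizer {s}).centralizer) : ↑g * z * ↑g⁻¹ ∈ anticommutant e := by
  rw [conj_mem_anticommutant_iff] at hgs ⊢
  set f := ↑g⁻¹ * e * ↑g
  have hfz : Commute (f * e) z :=
    hzs _ (mem_centralizer_singleton.mpr (commute_mul_of_mem_anticommutant hs hgs))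
  simpa only [mem_anticommutant, mul_assoc, he, mul_one] using
    SemiconjBy.mul_left hfz.neg_right hz

theorem commute_mul_of_mul_mul_eq_self (h : Commute u s) (hst : Commute s t)
    (hsts : s * t * s = s) : Commute u (s * t) :=
  semiconjBy_mul_of_mul_mul_eq_self h hst hsts hst hsts

theorem commute_mul_of_mem_anticommutant_of_mul_mul_eq_self (hs : s ∈ anticommutant e)
    (hst : Commute s t) (hsts : s * t * s = s) : Commute e (s * t) := by
  simpa only [Commute, neg_mul_neg] using semiconjBy_mul_of_mul_mul_eq_self (y' := -t) hs hst hsts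
    hst.neg_left.neg_right (by rw [neg_mul_neg, mul_neg, hsts])

theorem mul_sub_mul_mul_mul_eq_two_mul (he : e * e = 1) (ha : a ∈ anticommutant e)
    (hr : a * r * a = a) : a * (r - e * r * e) * a = 2 * a := by
  have hae : a * e = -(e * a) := mul_eq_neg_mul_of_mem_anticommutant ha
  have hea : e * a = -(a * e) := by rw [hae, neg_neg]
  have hconj : a * (e * r * e) * a = -a :=
    calc a * (e * r * e) * a = a * e * r * (e * a) := by simp only [mul_assoc]
      _ = -(e * a) * r * -(a * e) := by rw [← hae, ← hea]
      _ = e * (a * r * a) * e := by noncomm_ring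
      _ = -a := by rw [hr, hea, neg_mul, mul_assoc, he, mul_one]
  rw [mul_sub, sub_mul, hr, hconj, sub_neg_eq_add, two_mul]

theorem eq_zero_of_eq_neg (h2 : IsLeftRegular (2 : R)) (h : x = -x) : x = 0 := by
  rwa [eq_neg_iff_add_eq_zero, ← two_mul, h2.mul_left_eq_zero_iff] at h

theorem commute_of_mem_relBicentralizer {p : Set R} (hz : z ∈ relBicentralizer p s) (hw : w ∈ p)
    (hws : Commute w s) : Commute z w :=
  (hz.2 w ⟨hw, mem_centralizer_singleton.mpr hws⟩).symm

/-- Both `w` and `e * w` lie in `p^s`, so `z` commutes with them, while it anticommutes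
with `e`. -/
theorem mul_eq_zero_of_mem_relBicentralizer (h2 : IsLeftRegular (2 : R)) (he : e * e = 1)
    (hs : s ∈ anticommutant e) (hz : z ∈ relBicentralizer (anticommutant e) s)
    (hw : w ∈ anticommutant e) (hsw : s * w = 0) (hws : w * s = 0) : w * z = 0 := by
  have hzw : z * w = w * z := commute_of_mem_relBicentralizer hz hw (hws.trans hsw.symm)
  have hews : Commute (e * w) s := by
    rw [commute_iff_eq, mul_assoc, hws, ← mul_assoc, mul_eq_neg_mul_of_mem_anticommutant hs,
      neg_mul, mul_assoc, hsw, mul_zero, neg_zero]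
  have hzew : z * (e * w) = e * w * z :=
    commute_of_mem_relBicentralizer hz (mul_left_mem_anticommutant hw (.refl e)) hews
  have hneg : e * (w * z) = -(e * (w * z)) :=
    calc e * (w * z) = -(-z * e * w) := by rw [← mul_assoc, ← hzew]; noncomm_ring
      _ = -(e * (w * z)) := by rw [← hz.1.eq, mul_assoc, hzw]
  calc w * z = e * (e * (w * z)) := by rw [← mul_assoc, he, one_mul]
    _ = 0 := by rw [eq_zero_of_eq_neg h2 hneg, mul_zero]

/-- `1 - s * t` plays the role of the projection onto the kernel of `s`. -/
theorem mul_one_sub_mul_eq_zero_of_mem_relBicentralizer (h2 : IsLeftRegular (2 : R))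
    (hreg : ∀ x : R, ∃ r, x * r * x = x) (he : e * e = 1) (hs : s ∈ anticommutant e)
    (hst : Commute s t) (hsts : s * t * s = s) (hz : z ∈ relBicentralizer (anticommutant e) s) :
    z * (1 - s * t) = 0 := by
  set π := 1 - s * t with hπ
  have hsπ : s * π = 0 := by rw [hπ, mul_sub, mul_one, hst.eq, ← mul_assoc, hsts, sub_self]
  have hπs : π * s = 0 := by rw [hπ, sub_mul, one_mul, hsts, sub_self]
  have hzπ : Commute z π := (Commute.one_right z).sub_right
    (commute_mul_of_mul_mul_eq_self (commute_of_mem_relBicentralizer hz hs (.refl s)) hst hsts)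
  have heπ : Commute e π := (Commute.one_right e).sub_right
    (commute_mul_of_mem_anticommutant_of_mul_mul_eq_self hs hst hsts)
  obtain ⟨r, hr⟩ := hreg (z * π)
  set d := r - e * r * e
  have hd : π * d * π ∈ anticommutant e := mul_right_mem_anticommutant
    (mul_left_mem_anticommutant (sub_mul_mul_mem_anticommutant he r) heπ) heπ
  have hdz : π * d * π * z = 0 := mul_eq_zero_of_mem_relBicentralizer h2 he hs hz hd
    (by rw [← mul_assoc, ← mul_assoc, hsπ, zero_mul, zero_mul]) (by rw [mul_assoc, hπs, mul_zero])
  refine h2.mul_left_eq_zero_iff.mp ?_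
  calc 2 * (z * π) = z * π * d * (z * π) :=
        (mul_sub_mul_mul_mul_eq_two_mul he (mul_right_mem_anticommutant hz.1 heπ) hr).symm
    _ = z * π * d * (π * z) := by rw [hzπ.eq]
    _ = z * (π * d * π * z) := by simp only [mul_assoc]
    _ = 0 := by rw [hdz, mul_zero]

theorem commute_of_mem_relBicentralizer_of_commute (h2 : IsLeftRegular (2 : R))
    (hreg : ∀ x : R, ∃ r, x * r * x = x) (he : e * e = 1) (hs : s ∈ anticommutant e)
    (hst : Commute s t) (hsts : s * t * s = s) (hz : z ∈ relBicentralizer (anticommutant e) s)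
    (hue : Commute e u) (hus : Commute u s) : Commute z u := by
  have hzst : z * (s * t) = z := by
    simpa only [mul_sub, mul_one, sub_eq_zero, eq_comm] using
      mul_one_sub_mul_eq_zero_of_mem_relBicentralizer h2 hreg he hs hst hsts hz
  have hzs : Commute z s := commute_of_mem_relBicentralizer hz hs (.refl s)
  have hzsu : Commute z (s * u) := commute_of_mem_relBicentralizer hz
    (mul_right_mem_anticommutant hs hue) (.mul_left (.refl s) hus)
  have hust : Commute u (s * t) := commute_mul_of_mul_mul_eq_self hus hst hsts
  calc z * u = z * (u * (s * t)) := by rw [hust.eq, ← mul_assoc, hzst]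
    _ = z * (s * u) * t := by rw [← hus.eq]; simp only [mul_assoc]
    _ = u * (s * z) * t := by rw [hzsu.eq, ← hus.eq, mul_assoc u]
    _ = u * (z * (s * t)) := by rw [← hzs.eq]; simp only [mul_assoc]
    _ = u * z := by rw [hzst]

theorem relBicentralizer_anticommutant_subset (h2 : IsLeftRegular (2 : R))
    (hreg : ∀ x : R, ∃ r, x * r * x = x) (he : e * e = 1) (hs : s ∈ anticommutant e)
    (hst : Commute s t) (hsts : s * t * s = s) :
    relBicentralizer (anticommutant e) s ⊆ (Set.centralizer {s}).centralizer := by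
  intro z hz u hu
  have hus : Commute u s := mem_centralizer_singleton.mp hu
  have hconj : Commute (e * u * e) s := commute_mul_mul_of_mem_anticommutant hs hus
  have hadd : Commute z (u + e * u * e) := commute_of_mem_relBicentralizer_of_commute h2 hreg he hs
    hst hsts hz (commute_add_mul_mul he u) (hus.add_left hconj)
  have hsub : Commute z (u - e * u * e) := commute_of_mem_relBicentralizer hz
    (sub_mul_mul_mem_anticommutant he u) (hus.sub_left hconj)
  have htwo : Commute z (2 * u) := by
    simpa only [add_add_sub_cancel, ← two_mul] using hadd.add_right hsub
  apply h2
  change 2 * (u * z) = 2 * (z * u)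
  rw [two_mul (z * u), ← mul_add, ← two_mul, htwo.eq, mul_assoc]

end Ring

section Module

open LinearMap Submodule

variable {A V : Type*} [Ring A] [AddCommGroup V] [Module A V] {Va Vb : Submodule A V} {v : V}

theorem exists_commute_mul_mul_eq_self {s : Module.End A V} (h : IsCompl (ker s) (range s)) :
    ∃ t, Commute s t ∧ s * t * s = s := by
  set P := (ker s).projection _ h
  have hsP (v : V) : s (P v) = 0 := (ker s).projection_apply_mem h v
  have hPs (v : V) : P (s v) = 0 := (ker s).projection_apply_of_mem_right h ⟨v, rfl⟩
  have hP {v : V} (hv : s v = 0) : P v = v := (ker s).projection_apply_of_mem_left h hv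
  have hbij : Function.Bijective (s + P) := by
    refine ⟨(injective_iff_map_eq_zero _).mpr fun v hv ↦ ?_, fun v ↦ ?_⟩
    · have hPv : P v = 0 := by simpa [hPs, hP (hsP v)] using congr(P $hv)
      have hsv : s v = 0 := by simpa [hPv] using hv
      rw [← hP hsv, hPv]
    · obtain ⟨y, hy⟩ : (range s).projection _ h.symm v ∈ range s := projection_apply_mem _ v
      refine ⟨P v + (y - P y), ?_⟩
      simpa [hsP, hP (hsP _), hy, add_comm] using projection_add_projection_eq_self h v
  obtain ⟨u, hu⟩ := (Module.End.isUnit_iff _).mpr hbij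
  have hsu : s * u = s * s := by ext v; simp [hu, hsP]
  have hus : u * s = s * s := by ext v; simp [hu, hPs]
  have hcomm : Commute s ↑u⁻¹ := Commute.units_inv_right (hsu.trans hus.symm)
  exact ⟨↑u⁻¹, hcomm, by rw [hcomm.eq, mul_assoc, ← hus, Units.inv_mul_cancel_left]⟩

/-- The space `p = Hom(Va, Vb) ⊕ Hom(Vb, Va)` for submodules of an arbitrary module; for
`V = 𝕂^N` it is `pAIII Va Vb`. -/
def offDiagonal (Va Vb : Submodule A V) : Set (Module.End A V) :=
  {x | Va.map x ≤ Vb ∧ Vb.map x ≤ Va}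

/-- The involution `ε` attached to `V = Va ⊕ Vb`: the identity on `Va` and `-1` on `Vb`. -/
noncomputable def gradingInvolution (h : IsCompl Va Vb) : Module.End A V :=
  Va.projection Vb h - Vb.projection Va h.symm

theorem gradingInvolution_symm (h : IsCompl Va Vb) :
    gradingInvolution h.symm = -gradingInvolution h := by
  simp only [gradingInvolution, neg_sub]

theorem gradingInvolution_apply_left (h : IsCompl Va Vb) (hv : v ∈ Va) :
    gradingInvolution h v = v := by
  simp [gradingInvolution, projection_apply_of_mem_left h hv,
    projection_apply_of_mem_right h.symm hv]

theorem gradingInvolution_apply_right (h : IsCompl Va Vb) (hv : v ∈ Vb) :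
    gradingInvolution h v = -v := by
  simp [gradingInvolution, projection_apply_of_mem_right h hv,
    projection_apply_of_mem_left h.symm hv]

theorem gradingInvolution_mul_self (h : IsCompl Va Vb) :
    gradingInvolution h * gradingInvolution h = 1 := by
  refine ext_on_codisjoint h.codisjoint (fun v hv ↦ ?_) fun v hv ↦ ?_
  · simp [gradingInvolution_apply_left h hv]
  · simp [gradingInvolution_apply_right h hv]

theorem offDiagonal_subset_anticommutant (h : IsCompl Va Vb) :
    offDiagonal Va Vb ⊆ anticommutant (gradingInvolution h) := by
  rintro x ⟨hab, hba⟩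
  refine ext_on_codisjoint h.codisjoint (fun v hv ↦ ?_) fun v hv ↦ ?_
  · simp [gradingInvolution_apply_left h hv, gradingInvolution_apply_right h (hab ⟨v, hv, rfl⟩)]
  · simp [gradingInvolution_apply_right h hv, gradingInvolution_apply_left h (hba ⟨v, hv, rfl⟩)]

end Module

section DivisionRing

open LinearMap Submodule

variable {K V : Type*} [DivisionRing K] [AddCommGroup V] [Module K V] {Va Vb : Submodule K V}
  {v : V}

theorem exists_mul_mul_eq_self (f : Module.End K V) : ∃ r, f * r * f = f := by
  obtain ⟨g, hg⟩ := f.rangeRestrict.exists_rightInverse_of_surjective f.range_rangeRestrict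
  obtain ⟨r, hr⟩ := g.exists_extend
  refine ⟨r, LinearMap.ext fun v ↦ ?_⟩
  have hrv : r (f v) = g (f.rangeRestrict v) := congr($hr (f.rangeRestrict v))
  have hgv : f.rangeRestrict (g (f.rangeRestrict v)) = f.rangeRestrict v :=
    congr($hg (f.rangeRestrict v))
  simpa [hrv] using congr(($hgv : V))

variable [NeZero (2 : K)]

theorem isLeftRegular_two_end : IsLeftRegular (2 : Module.End K V) := by
  refine isLeftRegular_iff_right_eq_zero_of_mul.mpr fun f hf ↦ LinearMap.ext fun v ↦ ?_
  have hfv : (2 : K) • f v = 0 := by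
    rw [two_smul]
    simpa [two_mul] using congr($hf v)
  exact (smul_eq_zero.mp hfv).resolve_left two_ne_zero

theorem mem_of_gradingInvolution_apply_eq_neg (h : IsCompl Va Vb)
    (hv : gradingInvolution h v = -v) : v ∈ Vb := by
  rw [← projection_apply_eq_zero_iff h]
  have hPv : (2 : K) • Va.projection Vb h v = 0 := by
    rw [two_smul]
    simpa [gradingInvolution] using congr($(projection_add_projection_eq_self h v) + $hv)
  exact (smul_eq_zero.mp hPv).resolve_left two_ne_zero

theorem map_le_of_mem_anticommutant (h : IsCompl Va Vb) {x : Module.End K V}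
    (hx : x ∈ anticommutant (gradingInvolution h)) : Va.map x ≤ Vb := by
  rintro _ ⟨v, hv, rfl⟩
  refine mem_of_gradingInvolution_apply_eq_neg h ?_
  simpa [gradingInvolution_apply_left h hv] using congr($(hx.eq) v)

theorem offDiagonal_eq_anticommutant (h : IsCompl Va Vb) :
    offDiagonal Va Vb = anticommutant (gradingInvolution h) := by
  refine (offDiagonal_subset_anticommutant h).antisymm fun x hx ↦
    ⟨map_le_of_mem_anticommutant h hx, map_le_of_mem_anticommutant h.symm ?_⟩
  rw [gradingInvolution_symm h]
  exact SemiconjBy.neg_left hx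

end DivisionRing

section Field

open Module.End LinearMap

variable {K V : Type*} [Field K] [AddCommGroup V] [Module K V] {s : Module.End K V}

theorem range_eq_iSup_eigenspace (h : ⨆ c, eigenspace s c = ⊤) :
    range s = ⨆ (c) (_ : c ≠ 0), eigenspace s c := by
  apply le_antisymm
  · rw [range_eq_map, ← h, Submodule.map_iSup]
    refine iSup_le fun c ↦ ?_
    rintro _ ⟨v, hv, rfl⟩
    rw [mem_eigenspace_iff.mp hv]
    obtain rfl | hc := eq_or_ne c 0
    · simp only [zero_smul, Submodule.zero_mem]
    · exact Submodule.smul_mem _ _ (le_iSup₂ (f := fun c (_ : c ≠ 0) ↦ eigenspace s c) c hc hv)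
  · refine iSup₂_le fun c hc v hv ↦ ⟨c⁻¹ • v, ?_⟩
    rw [map_smul, mem_eigenspace_iff.mp hv, inv_smul_smul₀ hc]

theorem isCompl_ker_range (h : ⨆ c, eigenspace s c = ⊤) : IsCompl (ker s) (range s) := by
  rw [range_eq_iSup_eigenspace h, ← eigenspace_zero]
  exact ⟨eigenspaces_iSupIndep s 0, codisjoint_iff.mpr ((iSup_split_single _ 0).symm.trans h)⟩

end Field

theorem isCompl_ker_range_of_isSemisimpleE {𝕂 : Type*} [Field 𝕂] {N : ℕ} {s : EndV 𝕂 N}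
    (hs : IsSemisimpleE s) : IsCompl (LinearMap.ker s) (LinearMap.range s) :=
  isCompl_ker_range (by simpa only [IsSemisimpleE, Module.End.eigenspace_def] using hs)

theorem cpps_subset_relBicentralizer {𝕂 : Type*} [Field 𝕂] {N : ℕ}
    (Va Vb : Submodule 𝕂 (Fin N → 𝕂)) (s : EndV 𝕂 N) :
    cpps Va Vb s ⊆ relBicentralizer (offDiagonal Va Vb) s := fun _ ⟨hz, hzc⟩ ↦
  ⟨hz, fun w ⟨hw, hws⟩ ↦ (hzc w hw (mem_centralizer_singleton.mp hws)).symm⟩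

end SymmetricPairAIII

theorem conj_of_regular_in_cpps_typeAIII_general {K V : Type*} [DivisionRing K] [NeZero (2 : K)]
    [AddCommGroup V] [Module K V] {Va Vb : Submodule K V} (hVab : IsCompl Va Vb)
    {s : Module.End K V} (hs : s ∈ offDiagonal Va Vb)
    (hker : IsCompl (LinearMap.ker s) (LinearMap.range s)) (g : (Module.End K V)ˣ)
    (hgs : ↑g * s * ↑g⁻¹ ∈ offDiagonal Va Vb) {z : Module.End K V}
    (hz : z ∈ relBicentralizer (offDiagonal Va Vb) s) :
    ↑g * z * ↑g⁻¹ ∈ offDiagonal Va Vb := by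
  rw [offDiagonal_eq_anticommutant hVab] at hs hgs hz ⊢
  have he := gradingInvolution_mul_self hVab
  obtain ⟨t, hst, hsts⟩ := exists_commute_mul_mul_eq_self hker
  exact conj_mem_anticommutant he hs g hgs hz.1 (relBicentralizer_anticommutant_subset
    isLeftRegular_two_end exists_mul_mul_eq_self he hs hst hsts hz)

theorem conj_of_regular_in_cpps_typeAIII {𝕂 : Type*} [Field 𝕂] [IsAlgClosed 𝕂]
    [CharZero 𝕂] {N : ℕ}
    (Va Vb : Submodule 𝕂 (Fin N → 𝕂)) (hVab : IsCompl Va Vb)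
    (s : EndV 𝕂 N) (hs : s ∈ pAIII Va Vb) (hss : IsSemisimpleE s)
    (g : (EndV 𝕂 N)ˣ) (hgs : conjAct g s ∈ pAIII Va Vb)
    (z : EndV 𝕂 N) (hz : z ∈ cpps Va Vb s)
    (hzmin : ∀ z' ∈ cpps Va Vb s,
      Module.finrank 𝕂 (centSubE z) ≤ Module.finrank 𝕂 (centSubE z')) :
    conjAct g z ∈ pAIII Va Vb :=
  conj_of_regular_in_cpps_typeAIII_general hVab hs (isCompl_ker_range_of_isSemisimpleE hss) g hgs
    (cpps_subset_relBicentralizer Va Vb s hz)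
end
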